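/- Let γ > 0, 1 < α < 2, p > 1, a > 0, b > 0, and let f be locally integrable on [0,∞). Suppose w ∈ C¹([0,∞)), w ≢ 0, the function t ↦ ₀I_t^{2−α}(w(s) − w'(0)s − w(0)) is in AC²([0,T]) for every T > 0, and for almost every t ≥ 0 one has (₀D_t^α w)(t) + a·w(t) = (₀I_t^γ f)(t) and f(t) ≥ b·|w(t)|^p. If γ ≥ α/2, α + γ ≤ 2, and w'(0) > 0, then liminf_{t→+∞} t^{α−1}·w(t) > 0. -/

import Mathlib

/-!
Integrating the equation twice and cancelling the outer `I^(2 - α)` turns it into the Volterra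
equation `w = w(0) + w'(0) t + I^(α + γ) f - a I^α w`. Its solution is a combination of the kernels
`e_β(t) = t ^ (β - 1) E_{α,β}(-a t ^ α)`, namely `w = w(0) e_1 + w'(0) e_2 + e_{α + γ} * f`.

The Laplace transform of `e_β` is `s ^ (α - β) / (s ^ α + a)`. For `3α/2 ≤ β` it is completely
monotone on `(0, ∞)`, so `e_β` is nonnegative; as `α/2 ≤ γ`, this applies to `β = α + γ`, and
`0 ≤ f` leaves `w ≥ w(0) e_1 + w'(0) e_2`. Inverting the derivative of the transform along vertical
lines tending to the imaginary axis gives `e_β(t) = O(1/t)` for `0 < β < α`. Hence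
`t ^ (α - 1) e_1(t) → 0`, and `a e_2(t) = t ^ (1 - α) / Γ(2 - α) - e_{2 - α}(t)` gives
`t ^ (α - 1) e_2(t) → 1 / (a Γ(2 - α))`.
-/

open MeasureTheory Filter

/-- Riemann–Liouville fractional integral of order `σ` based at `0`:
`(₀I_t^σ f)(t) = (1/Γ(σ)) ∫₀ᵗ (t−s)^{σ−1} f(s) ds`. -/
noncomputable def rlInt (σ : ℝ) (f : ℝ → ℝ) (t : ℝ) : ℝ :=
  (1 / Real.Gamma σ) * ∫ s in (0:ℝ)..t, (t - s) ^ (σ - 1) * f s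

/-- The function whose second derivative is the (left) Caputo derivative of order `α ∈ (1,2]`:
for `α < 2` it is `₀I_t^{2−α}(w(s) − w'(0)·s − w(0))`, and for `α = 2` it is `w` itself. -/
noncomputable def capKernel (α : ℝ) (w : ℝ → ℝ) : ℝ → ℝ :=
  if α = 2 then w else rlInt (2 - α) (fun s => w s - deriv w 0 * s - w 0)

/-- Left Caputo fractional derivative of order `α ∈ (1,2]`:
`(₀D_t^α w)(t) = (d²/dt²)[ ₀I_t^{2−α}(w(s) − w'(0)s − w(0)) ](t)` (second derivative of `w` when `α = 2`). -/
noncomputable def caputoD (α : ℝ) (w : ℝ → ℝ) : ℝ → ℝ :=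
  deriv (deriv (capKernel α w))

/-- `g ∈ AC²([0,T])`: `g` is differentiable on `[0,T]`, its second derivative is integrable,
and `g'` is the integral of `g''` (i.e. `g'` is absolutely continuous). -/
def AC2On (g : ℝ → ℝ) (T : ℝ) : Prop :=
  (∀ t ∈ Set.Icc (0:ℝ) T, DifferentiableAt ℝ g t) ∧
  IntervalIntegrable (deriv (deriv g)) volume 0 T ∧
  ∀ t ∈ Set.Icc (0:ℝ) T, deriv g t = deriv g 0 + ∫ s in (0:ℝ)..t, deriv (deriv g) s

open Set Topology

/-- The convolution kernel `t ^ (σ - 1) / Γ(σ)` of the fractional integral of order `σ`. -/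
noncomputable def rlKernel (σ t : ℝ) : ℝ := t ^ (σ - 1) / Real.Gamma σ

/-- The Mittag-Leffler kernel `t ^ (β - 1) E_{α,β}(-a t ^ α)` of the resolvent of the fractional
integral, for `t > 0`. Each power of `t` is kept inside the series, so that the terms are the
kernels of the iterated fractional integrals. -/
noncomputable def mlKernel (α β a t : ℝ) : ℝ := ∑' n : ℕ, (-a) ^ n * rlKernel (α * n + β) t

section MittagLefflerKernel

variable {α β σ a t T : ℝ}

lemma rlKernel_one (t : ℝ) : rlKernel 1 t = 1 := by simp [rlKernel]

lemma rlKernel_two (t : ℝ) : rlKernel 2 t = t := by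
  norm_num [rlKernel, show (2 : ℝ) - 1 = 1 by norm_num]

lemma rlKernel_nonneg (hσ : 0 < σ) (ht : 0 ≤ t) : 0 ≤ rlKernel σ t :=
  div_nonneg (Real.rpow_nonneg ht _) (Real.Gamma_pos_of_pos hσ).le

lemma rlKernel_le_rlKernel (hσ : 1 ≤ σ) (ht : 0 ≤ t) (htT : t ≤ T) :
    rlKernel σ t ≤ rlKernel σ T :=
  div_le_div_of_nonneg_right (Real.rpow_le_rpow ht htT (by linarith))
    (Real.Gamma_pos_of_pos (by linarith)).le

lemma continuousOn_rlKernel (σ : ℝ) : ContinuousOn (rlKernel σ) (Ioi 0) :=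
  (continuousOn_id.rpow_const fun _ ht => Or.inl (ne_of_gt ht)).div_const _

lemma measurable_rlKernel (σ : ℝ) : Measurable (rlKernel σ) :=
  (measurable_id.pow_const _).div_const _

lemma intervalIntegrable_rlKernel (hσ : 1 ≤ σ) (x y : ℝ) :
    IntervalIntegrable (rlKernel σ) volume x y :=
  ((Real.continuous_rpow_const (sub_nonneg.2 hσ)).div_const _).intervalIntegrable x y

lemma factorial_le_Gamma (hα : 1 ≤ α) (hβ : 0 < β) (n : ℕ) :
    (n.factorial : ℝ) ≤ Real.Gamma (α * (n + 2 : ℕ) + β) := by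
  have : (0 : ℝ) ≤ n := n.cast_nonneg
  calc (n.factorial : ℝ) ≤ ((n + 1).factorial : ℝ) := by
        exact_mod_cast Nat.factorial_le n.le_succ
    _ = Real.Gamma ((n + 1 : ℕ) + 1) := (Real.Gamma_nat_eq_factorial _).symm
    _ ≤ Real.Gamma (α * (n + 2 : ℕ) + β) := by
      apply Real.Gamma_strictMonoOn_Ici.monotoneOn <;> push_cast [mem_Ici] <;> nlinarith

lemma summable_pow_mul_rlKernel (hα : 1 ≤ α) (hβ : 0 < β) (A : ℝ) (ht : 0 < t) :
    Summable fun n : ℕ => A ^ n * rlKernel (α * n + β) t := by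
  rw [← summable_nat_add_iff 2]
  set X := |A| * t ^ α
  refine Summable.of_norm_bounded
    ((Real.summable_pow_div_factorial X).mul_left (X ^ 2 * t ^ (β - 1))) fun n => ?_
  have hpow : t ^ (α * (n + 2 : ℕ) + β - 1) = (t ^ α) ^ (n + 2) * t ^ (β - 1) := by
    rw [add_sub_assoc, Real.rpow_add ht, Real.rpow_mul ht.le, Real.rpow_natCast]
  have : (0 : ℝ) < Real.Gamma (α * (n + 2 : ℕ) + β) := Real.Gamma_pos_of_pos (by positivity)
  rw [norm_mul, norm_pow, Real.norm_eq_abs,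
    Real.norm_of_nonneg (rlKernel_nonneg (by positivity) ht.le), rlKernel, hpow]
  calc |A| ^ (n + 2) * ((t ^ α) ^ (n + 2) * t ^ (β - 1) / Real.Gamma (α * (n + 2 : ℕ) + β))
      = X ^ 2 * t ^ (β - 1) * (X ^ n / Real.Gamma (α * (n + 2 : ℕ) + β)) := by ring
    _ ≤ X ^ 2 * t ^ (β - 1) * (X ^ n / n.factorial) := by
      gcongr
      exact factorial_le_Gamma hα hβ n

lemma hasSum_mlKernel (hα : 1 ≤ α) (hβ : 0 < β) (ht : 0 < t) :
    HasSum (fun n : ℕ => (-a) ^ n * rlKernel (α * n + β) t) (mlKernel α β a t) :=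
  (summable_pow_mul_rlKernel hα hβ _ ht).hasSum

lemma mlKernel_eq_sub (hα : 1 ≤ α) (hβ : 0 < β) (ht : 0 < t) :
    mlKernel α β a t = rlKernel β t - a * mlKernel α (α + β) a t := by
  have hsum := summable_pow_mul_rlKernel hα hβ (-a) ht
  rw [mlKernel, hsum.tsum_eq_zero_add, mlKernel, sub_eq_add_neg, ← neg_mul, ← tsum_mul_left]
  congr 1
  · simp
  · refine tsum_congr fun n => ?_
    rw [pow_succ', mul_assoc]
    push_cast
    ring_nf

lemma norm_mlKernel_term_le (hα : 1 ≤ α) (hβ : 1 ≤ β) (ht : 0 ≤ t) (htT : t ≤ T) (n : ℕ) :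
    ‖(-a) ^ n * rlKernel (α * n + β) t‖ ≤ |a| ^ n * rlKernel (α * n + β) T := by
  have hn : 1 ≤ α * n + β := le_add_of_nonneg_of_le (by positivity) hβ
  rw [norm_mul, norm_pow, norm_neg, Real.norm_eq_abs,
    Real.norm_of_nonneg (rlKernel_nonneg (by linarith) ht)]
  gcongr
  exact rlKernel_le_rlKernel hn ht htT

lemma continuousOn_mlKernel (hα : 1 ≤ α) (hβ : 0 < β) :
    ContinuousOn (mlKernel α β a) (Ioi 0) := by
  wlog hβ1 : 1 ≤ β generalizing β
  · refine ContinuousOn.congr ?_ fun t ht => mlKernel_eq_sub hα hβ ht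
    exact (continuousOn_rlKernel β).sub ((this (by linarith) (by linarith)).const_mul a)
  intro x hx
  have hx : 0 < x := hx
  have hcont : ContinuousOn (mlKernel α β a) (Ioo 0 (x + 1)) :=
    continuousOn_tsum (fun n => ((continuousOn_rlKernel _).mono Ioo_subset_Ioi_self).const_mul _)
      (summable_pow_mul_rlKernel hα hβ |a| (by positivity : 0 < x + 1))
      fun n t ht => norm_mlKernel_term_le hα hβ1 ht.1.le ht.2.le n
  exact (hcont.continuousAt (Ioo_mem_nhds hx (lt_add_one x))).continuousWithinAt

end MittagLefflerKernel

/-- Complete monotonicity on `(0, ∞)` up to order `n`: the derivatives of order at most `n` exist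
there and alternate in sign, starting from `0 ≤ f`. Only functions with explicit derivatives are
used, so the derivatives are supplied one at a time rather than through `iteratedDeriv`. -/
def CompletelyMonotoneUpTo : ℕ → (ℝ → ℝ) → Prop
  | 0, f => ∀ x > 0, 0 ≤ f x
  | n + 1, f => (∀ x > 0, 0 ≤ f x) ∧
      ∃ g : ℝ → ℝ, (∀ x > 0, HasDerivAt f (-g x) x) ∧ CompletelyMonotoneUpTo n g

namespace CompletelyMonotoneUpTo

variable {f g : ℝ → ℝ} {n : ℕ} {x : ℝ}

lemma nonneg (hf : CompletelyMonotoneUpTo n f) (hx : 0 < x) : 0 ≤ f x := by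
  cases n with
  | zero => exact hf x hx
  | succ n => exact hf.1 x hx

lemma of_succ (hf : CompletelyMonotoneUpTo (n + 1) f) : CompletelyMonotoneUpTo n f := by
  induction n generalizing f with
  | zero => exact hf.1
  | succ n ih =>
    obtain ⟨hf0, f', hf', hmono⟩ := hf
    exact ⟨hf0, f', hf', ih hmono⟩

lemma add (hf : CompletelyMonotoneUpTo n f) (hg : CompletelyMonotoneUpTo n g) :
    CompletelyMonotoneUpTo n fun x => f x + g x := by
  induction n generalizing f g with
  | zero => exact fun x hx => add_nonneg (hf x hx) (hg x hx)
  | succ n ih =>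
    obtain ⟨hf0, f', hf', hmonof⟩ := hf
    obtain ⟨hg0, g', hg', hmonog⟩ := hg
    refine ⟨fun x hx => add_nonneg (hf0 x hx) (hg0 x hx), fun x => f' x + g' x, fun x hx => ?_,
      ih hmonof hmonog⟩
    rw [neg_add]
    exact (hf' x hx).add (hg' x hx)

lemma mul (hf : CompletelyMonotoneUpTo n f) (hg : CompletelyMonotoneUpTo n g) :
    CompletelyMonotoneUpTo n fun x => f x * g x := by
  induction n generalizing f g with
  | zero => exact fun x hx => mul_nonneg (hf x hx) (hg x hx)
  | succ n ih =>
    have hfn := hf.of_succ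
    have hgn := hg.of_succ
    obtain ⟨hf0, f', hf', hmonof⟩ := hf
    obtain ⟨hg0, g', hg', hmonog⟩ := hg
    refine ⟨fun x hx => mul_nonneg (hf0 x hx) (hg0 x hx), fun x => f' x * g x + f x * g' x,
      fun x hx => ?_, (ih hmonof hgn).add (ih hfn hmonog)⟩
    exact ((hf' x hx).mul (hg' x hx)).congr_deriv (by ring)

lemma const_mul_rpow_neg (n : ℕ) {c δ : ℝ} (hc : 0 ≤ c) (hδ : 0 ≤ δ) :
    CompletelyMonotoneUpTo n fun x => c * x ^ (-δ) := by
  induction n generalizing c δ with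
  | zero => exact fun x hx => by positivity
  | succ n ih =>
    refine ⟨fun x hx => by positivity, fun x => c * δ * x ^ (-(δ + 1)), fun x hx => ?_,
      ih (by positivity) (by positivity)⟩
    refine ((Real.hasDerivAt_rpow_const (Or.inl hx.ne')).const_mul c).congr_deriv ?_
    rw [neg_add']
    ring

-- Minus the derivative is the function itself times `τ κ x ^ (κ - 1)`, so that the order can be
-- raised one step at a time.
lemma exp_neg_mul_rpow (n : ℕ) {τ κ : ℝ} (hτ : 0 ≤ τ) (hκ : 0 ≤ κ) (hκ1 : κ ≤ 1) :
    CompletelyMonotoneUpTo n fun x => Real.exp (-(τ * x ^ κ)) := by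
  induction n with
  | zero => exact fun x _ => (Real.exp_pos _).le
  | succ n ih =>
    refine ⟨fun x _ => (Real.exp_pos _).le,
      fun x => τ * κ * x ^ (-(1 - κ)) * Real.exp (-(τ * x ^ κ)), fun x hx => ?_,
      (const_mul_rpow_neg n (by positivity) (by linarith)).mul ih⟩
    have hder := (Real.hasDerivAt_rpow_const (p := κ) (Or.inl hx.ne')).const_mul τ
    refine hder.fun_neg.exp.congr_deriv ?_
    rw [neg_sub]
    ring

lemma antitoneOn (hf : CompletelyMonotoneUpTo (n + 1) f) : AntitoneOn f (Ioi 0) := by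
  obtain ⟨_, f', hf', hmono⟩ := hf
  refine antitoneOn_of_hasDerivWithinAt_nonpos (f' := fun x => -f' x) (convex_Ioi 0)
    (fun y hy => (hf' y hy).continuousAt.continuousWithinAt) (fun y hy => ?_) fun y hy => ?_
  · exact (hf' y (interior_subset hy)).hasDerivWithinAt
  · exact neg_nonpos.2 (hmono.nonneg (interior_subset hy))

lemma neg_fwdDiff {h : ℝ} (hh : 0 ≤ h) (hf : CompletelyMonotoneUpTo (n + 1) f) :
    CompletelyMonotoneUpTo n (-fwdDiff h f) := by
  have hnonneg {m : ℕ} {f : ℝ → ℝ} (hf : CompletelyMonotoneUpTo (m + 1) f) (x : ℝ) (hx : 0 < x) :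
      0 ≤ (-fwdDiff h f) x := by
    have := hf.antitoneOn hx (hx.trans_le (le_add_of_nonneg_right hh)) (le_add_of_nonneg_right hh)
    simpa [fwdDiff] using this
  induction n generalizing f with
  | zero => exact hnonneg hf
  | succ n ih =>
    refine ⟨hnonneg hf, ?_⟩
    obtain ⟨_, f', hf', hmono⟩ := hf
    refine ⟨-fwdDiff h f', fun x hx => ?_, ih hmono⟩
    refine (((hf' (x + h) (by linarith)).comp_add_const x h).sub (hf' x hx)).neg.congr_deriv ?_
    simp only [Pi.neg_apply, fwdDiff]
    ring

lemma fwdDiff_iter_nonneg {h : ℝ} (hh : 0 ≤ h) (hf : CompletelyMonotoneUpTo n f) (hx : 0 < x) :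
    0 ≤ (-1) ^ n * (fwdDiff h)^[n] f x := by
  induction n generalizing f with
  | zero => simpa using hf x hx
  | succ n ih =>
    have := ih (hf.neg_fwdDiff hh)
    rwa [← neg_one_smul ℝ (fwdDiff h f), fwdDiff_iter_const_smul, Pi.smul_apply, smul_eq_mul,
      ← mul_assoc, ← pow_succ, ← Function.iterate_succ_apply] at this

end CompletelyMonotoneUpTo

section HausdorffMoments

lemma fwdDiff_iter_integral {M Ω E : Type*} [AddCommMonoid M] [MeasurableSpace Ω]
    [NormedAddCommGroup E] [NormedSpace ℝ E] {μ : Measure Ω} {G : M → Ω → E} {h x : M} (n : ℕ)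
    (hG : ∀ k : ℕ, Integrable (G (x + k • h)) μ) :
    (fwdDiff h)^[n] (fun y => ∫ ω, G y ω ∂μ) x = ∫ ω, (fwdDiff h)^[n] (fun y => G y ω) x ∂μ := by
  simp only [fwdDiff_iter_eq_sum_shift, ← Int.cast_smul_eq_zsmul ℝ]
  rw [integral_finsetSum _ fun k _ => Integrable.fun_smul _ (hG k)]
  simp only [integral_smul]

lemma fwdDiff_iter_congr {M G : Type*} [AddCommMonoid M] [AddCommGroup G] {f g : M → G} {h x : M}
    (n : ℕ) (hfg : ∀ k : ℕ, f (x + k • h) = g (x + k • h)) :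
    (fwdDiff h)^[n] f x = (fwdDiff h)^[n] g x := by
  simp only [fwdDiff_iter_eq_sum_shift, hfg]

lemma fwdDiff_iter_exp_neg_mul (n : ℕ) (t x c : ℝ) :
    (-1) ^ n * (fwdDiff 1)^[n] (fun y => Real.exp (-(y * t)) * c) x
      = Real.exp (-(x * t)) * (1 - Real.exp (-t)) ^ n * c := by
  induction n generalizing c with
  | zero => simp
  | succ n ih =>
    have hdiff : fwdDiff 1 (fun y => Real.exp (-(y * t)) * c)
        = fun y => Real.exp (-(y * t)) * ((Real.exp (-t) - 1) * c) := by
      ext y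
      rw [fwdDiff, add_mul, neg_add, one_mul, Real.exp_add]
      ring
    rw [Function.iterate_succ_apply, hdiff, pow_succ', mul_assoc, ih]
    ring

variable {Ω : Type*} [MeasurableSpace Ω] {μ : Measure Ω} {e : Ω → unitInterval} {g : Ω → ℝ}

lemma integrable_continuousMap_comp_mul (he : Measurable e) (hg : Integrable g μ)
    (φ : C(unitInterval, ℝ)) : Integrable (fun ω => φ (e ω) * g ω) μ :=
  hg.bdd_mul (φ.continuous.measurable.comp he).aestronglyMeasurable
    (ae_of_all _ fun _ => φ.norm_coe_le_norm _)

lemma integral_bernsteinApproximation_nonneg (he : Measurable e) (hg : Integrable g μ)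
    (hmom : ∀ j n : ℕ, 0 ≤ ∫ ω, (e ω : ℝ) ^ j * (1 - e ω) ^ n * g ω ∂μ)
    {φ : C(unitInterval, ℝ)} (hφ : 0 ≤ φ) (n : ℕ) :
    0 ≤ ∫ ω, bernsteinApproximation n φ (e ω) * g ω ∂μ := by
  simp only [bernsteinApproximation.apply, Finset.sum_mul, smul_eq_mul]
  have hint (j : Fin (n + 1)) :
      Integrable (fun ω => bernstein n j (e ω) * φ (bernstein.z j) * g ω) μ :=
    integrable_continuousMap_comp_mul he hg
      (bernstein n j * ContinuousMap.const _ (φ (bernstein.z j)))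
  rw [integral_finsetSum _ fun j _ => hint j]
  refine Finset.sum_nonneg fun j _ => ?_
  have hterm : ∀ ω, bernstein n j (e ω) * φ (bernstein.z j) * g ω
      = φ (bernstein.z j) * n.choose j * ((e ω : ℝ) ^ (j : ℕ) * (1 - e ω) ^ (n - j) * g ω) := by
    intro ω
    rw [bernstein_apply]
    ring
  simp only [hterm, integral_const_mul]
  exact mul_nonneg (mul_nonneg (hφ _) (Nat.cast_nonneg _)) (hmom _ _)

lemma integral_continuousMap_comp_mul_nonneg (he : Measurable e) (hg : Integrable g μ)
    (hmom : ∀ j n : ℕ, 0 ≤ ∫ ω, (e ω : ℝ) ^ j * (1 - e ω) ^ n * g ω ∂μ)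
    {φ : C(unitInterval, ℝ)} (hφ : 0 ≤ φ) : 0 ≤ ∫ ω, φ (e ω) * g ω ∂μ := by
  suffices Tendsto (fun n => ∫ ω, bernsteinApproximation n φ (e ω) * g ω ∂μ) atTop
      (𝓝 (∫ ω, φ (e ω) * g ω ∂μ)) from
    ge_of_tendsto' this (integral_bernsteinApproximation_nonneg he hg hmom hφ)
  rw [tendsto_iff_dist_tendsto_zero]
  refine squeeze_zero (fun _ => dist_nonneg) (fun n => ?_)
    (by simpa using ((tendsto_iff_dist_tendsto_zero.1
      (bernsteinApproximation_uniform φ)).mul_const (∫ ω, ‖g ω‖ ∂μ)))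
  rw [dist_eq_norm, ← integral_sub (integrable_continuousMap_comp_mul he hg _)
    (integrable_continuousMap_comp_mul he hg _), ← integral_const_mul]
  refine norm_integral_le_of_norm_le (hg.norm.const_mul _) (ae_of_all _ fun ω => ?_)
  rw [← sub_mul, norm_mul, ← dist_eq_norm]
  exact mul_le_mul_of_nonneg_right (ContinuousMap.dist_apply_le_dist _) (norm_nonneg _)

end HausdorffMoments

section RealLaplace

variable {α β σ a x : ℝ}

lemma integral_exp_neg_mul_rlKernel (hσ : 0 < σ) (hx : 0 < x) :
    ∫ t in Ioi (0 : ℝ), Real.exp (-(x * t)) * rlKernel σ t = x ^ (-σ) := by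
  have hΓ := (Real.Gamma_pos_of_pos hσ).ne'
  calc ∫ t in Ioi (0 : ℝ), Real.exp (-(x * t)) * rlKernel σ t
      = ∫ t in Ioi (0 : ℝ), (Real.Gamma σ)⁻¹ * (t ^ (σ - 1) * Real.exp (-(x * t))) := by
        simp only [rlKernel]
        congr 1 with t
        ring
    _ = x ^ (-σ) := by
      rw [integral_const_mul, Real.integral_rpow_mul_exp_neg_mul_Ioi hσ hx, one_div,
        Real.inv_rpow hx.le, ← Real.rpow_neg hx.le]
      field_simp

lemma integrableOn_exp_neg_mul_rlKernel (hσ : 0 < σ) (hx : 0 < x) :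
    IntegrableOn (fun t => Real.exp (-(x * t)) * rlKernel σ t) (Ioi 0) := by
  refine Integrable.of_integral_ne_zero ?_
  rw [integral_exp_neg_mul_rlKernel hσ hx]
  positivity

lemma hasSum_pow_mul_rpow_neg (hx : 0 < x) (hxa : |a| < x ^ α) :
    HasSum (fun n : ℕ => (-a) ^ n * x ^ (-(α * n + β))) (x ^ (α - β) / (x ^ α + a)) := by
  have hxα : 0 < x ^ α := by positivity
  have hden : x ^ α + a ≠ 0 := by linarith [neg_abs_le a]
  have hratio : ‖-a / x ^ α‖ < 1 := by
    rwa [norm_div, norm_neg, Real.norm_of_nonneg hxα.le, Real.norm_eq_abs, div_lt_one hxα]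
  have hvalue : x ^ (α - β) / (x ^ α + a) = x ^ (-β) * (1 - -a / x ^ α)⁻¹ := by
    rw [sub_eq_add_neg, Real.rpow_add hx]
    field_simp
    rw [sub_neg_eq_add, div_self hden]
  rw [hvalue]
  refine ((hasSum_geometric_of_norm_lt_one hratio).mul_left _).congr_fun fun n => ?_
  rw [neg_add, Real.rpow_add hx, div_pow, Real.rpow_neg hx.le (α * n), Real.rpow_mul hx.le,
    Real.rpow_natCast]
  ring

lemma integral_exp_neg_mul_mlKernel (hα : 1 ≤ α) (hβ : 0 < β) (hx : 0 < x) (hxa : |a| < x ^ α) :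
    ∫ t in Ioi (0 : ℝ), Real.exp (-(x * t)) * mlKernel α β a t = x ^ (α - β) / (x ^ α + a) := by
  set F : ℕ → ℝ → ℝ := fun n t => (-a) ^ n * (Real.exp (-(x * t)) * rlKernel (α * n + β) t)
  have hpos (n : ℕ) : 0 < α * n + β := by positivity
  have hint (n : ℕ) : IntegrableOn (F n) (Ioi 0) :=
    (integrableOn_exp_neg_mul_rlKernel (hpos n) hx).const_mul _
  have hnorm (n : ℕ) : ∫ t in Ioi (0 : ℝ), ‖F n t‖ = |a| ^ n * x ^ (-(α * n + β)) := by
    rw [← integral_exp_neg_mul_rlKernel (hpos n) hx, ← integral_const_mul]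
    refine setIntegral_congr_fun measurableSet_Ioi fun t ht => ?_
    simp only [F, norm_mul, norm_pow, norm_neg, Real.norm_eq_abs, Real.abs_exp,
      abs_of_nonneg (rlKernel_nonneg (hpos n) (le_of_lt ht))]
  have hsummable : Summable fun n => ∫ t in Ioi (0 : ℝ), ‖F n t‖ := by
    simp only [hnorm]
    simpa using (hasSum_pow_mul_rpow_neg (a := -|a|) (β := β) hx (by simpa using hxa)).summable
  have htsum : ∫ t in Ioi (0 : ℝ), ∑' n, F n t
      = ∫ t in Ioi (0 : ℝ), Real.exp (-(x * t)) * mlKernel α β a t := by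
    refine integral_congr_ae (ae_of_all _ fun t => ?_)
    simp only [F, mlKernel, mul_left_comm _ (Real.exp _), tsum_mul_left]
  have hsum := hasSum_integral_of_summable_integral_norm hint hsummable
  simp only [htsum, F, integral_const_mul, integral_exp_neg_mul_rlKernel (hpos _) hx] at hsum
  exact hsum.unique (hasSum_pow_mul_rpow_neg hx hxa)

end RealLaplace

section Positivity

variable {u : ℝ → ℝ} {l t : ℝ}

lemma exists_continuousMap_comp_exp_neg_pos_iff {e : ℝ → unitInterval}
    (he : ∀ t > 0, (e t : ℝ) = Real.exp (-t)) (c d : ℝ) :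
    ∃ φ : C(unitInterval, ℝ), 0 ≤ φ ∧ ∀ s > 0, 0 < φ (e s) ↔ s ∈ Ioo c d := by
  refine ⟨⟨fun z => max 0 (min (z - Real.exp (-d)) (Real.exp (-c) - z)), by fun_prop⟩,
    fun z => le_max_left _ _, fun s hs => ?_⟩
  simp only [ContinuousMap.coe_mk, he s hs, lt_max_iff, lt_self_iff_false, false_or, lt_min_iff,
    sub_pos, Real.exp_lt_exp, neg_lt_neg_iff, mem_Ioo]
  exact and_comm

lemma nonneg_of_integral_continuousMap_mul_nonneg {e : ℝ → unitInterval}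
    (he : ∀ t > 0, (e t : ℝ) = Real.exp (-t)) (hu : ContinuousOn u (Ioi 0))
    (hint : ∀ φ : C(unitInterval, ℝ), IntegrableOn (fun t => φ (e t) * u t) (Ioi 0))
    (hnonneg : ∀ φ : C(unitInterval, ℝ), 0 ≤ φ → 0 ≤ ∫ t in Ioi (0 : ℝ), φ (e t) * u t)
    (ht : 0 < t) : 0 ≤ u t := by
  by_contra! hneg
  obtain ⟨ε, hε, hball⟩ : ∃ ε > 0, Ioo (t - ε) (t + ε) ⊆ {s | u s < 0 ∧ 0 < s} := by
    have hcont := hu.continuousAt (Ioi_mem_nhds ht)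
    simpa only [Real.ball_eq_Ioo] using
      Metric.mem_nhds_iff.1 ((hcont.eventually_lt_const hneg).and (lt_mem_nhds ht))
  obtain ⟨φ, hφ, hφpos⟩ := exists_continuousMap_comp_exp_neg_pos_iff he (t - ε) (t + ε)
  have hpos : 0 < ∫ s in Ioi (0 : ℝ), -(φ (e s) * u s) := by
    refine (integral_pos_iff_support_of_nonneg_ae ?_ (hint φ).neg).2 ?_
    · filter_upwards [ae_restrict_mem measurableSet_Ioi] with s hs
      rcases eq_or_lt_of_le (show 0 ≤ φ (e s) from hφ _) with h0 | h0
      · simp [← h0]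
      · exact neg_nonneg.2 (mul_nonpos_of_nonneg_of_nonpos (hφ _)
          (hball ((hφpos s hs).1 h0)).1.le)
    · rw [Measure.restrict_apply' measurableSet_Ioi]
      refine lt_of_lt_of_le ?_ (measure_mono (s := Ioo (t - ε) (t + ε)) fun s hs => ?_)
      · simp [hε]
      · obtain ⟨hus, hs0⟩ := hball hs
        exact ⟨neg_ne_zero.2 (mul_ne_zero ((hφpos s hs0).2 hs).ne' hus.ne), hs0⟩
  rw [integral_neg] at hpos
  linarith [hnonneg φ hφ]

lemma nonneg_of_fwdDiff_laplace_nonneg (hu : ContinuousOn u (Ioi 0))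
    (hint : ∀ x ≥ l, IntegrableOn (fun t => Real.exp (-(x * t)) * u t) (Ioi 0))
    (hdiff : ∀ n : ℕ, ∀ x ≥ l, 0 ≤ (-1) ^ n *
      (fwdDiff 1)^[n] (fun y => ∫ t in Ioi (0 : ℝ), Real.exp (-(y * t)) * u t) x)
    (ht : 0 < t) : 0 ≤ u t := by
  set e : ℝ → unitInterval := fun t => projIcc 0 1 zero_le_one (Real.exp (-t))
  have he : ∀ t > 0, (e t : ℝ) = Real.exp (-t) := fun t ht => by
    simp only [e, coe_projIcc, min_eq_right (Real.exp_le_one_iff.2 (neg_nonpos.2 ht.le)),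
      max_eq_right (Real.exp_pos _).le]
  have hem : Measurable e := by fun_prop
  have hg := hint l le_rfl
  have hmom (j n : ℕ) : 0 ≤ ∫ t in Ioi (0 : ℝ),
      (e t : ℝ) ^ j * (1 - e t) ^ n * (Real.exp (-(l * t)) * u t) := by
    have hlj : l ≤ l + j := le_add_of_nonneg_right j.cast_nonneg
    convert hdiff n (l + j) hlj using 1
    have hintk (k : ℕ) := hint (l + j + k • 1) (hlj.trans (by simp))
    rw [fwdDiff_iter_integral (G := fun y t => Real.exp (-(y * t)) * u t) n hintk,
      ← integral_const_mul]
    refine setIntegral_congr_fun measurableSet_Ioi fun t ht => ?_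
    simp only [fwdDiff_iter_exp_neg_mul, he t ht]
    rw [add_mul, neg_add, Real.exp_add, ← mul_neg (j : ℝ), Real.exp_nat_mul]
    ring
  have hprod : 0 ≤ Real.exp (-(l * t)) * u t :=
    nonneg_of_integral_continuousMap_mul_nonneg (u := fun t => Real.exp (-(l * t)) * u t) he
      (by fun_prop)
      (fun φ => integrable_continuousMap_comp_mul hem hg φ)
      (fun φ hφ => integral_continuousMap_comp_mul_nonneg hem hg hmom hφ) ht
  exact nonneg_of_mul_nonneg_right hprod (Real.exp_pos _)

lemma fwdDiff_iter_integral_nonneg {Ω : Type*} [MeasurableSpace Ω] {μ : Measure Ω}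
    {G : ℝ → Ω → ℝ} {h x : ℝ} (n : ℕ) (hh : 0 ≤ h) (hx : 0 < x)
    (hG : ∀ y > 0, Integrable (G y) μ)
    (hmono : ∀ᵐ ω ∂μ, CompletelyMonotoneUpTo n fun y => G y ω) :
    0 ≤ (-1) ^ n * (fwdDiff h)^[n] (fun y => ∫ ω, G y ω ∂μ) x := by
  rw [fwdDiff_iter_integral n fun k => hG _ (by positivity), ← integral_const_mul]
  refine integral_nonneg_of_ae ?_
  filter_upwards [hmono] with ω hω
  exact hω.fwdDiff_iter_nonneg hh hx

end Positivity

section MittagLefflerPositivity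

variable {α β a t u : ℝ}

lemma exp_neg_mul_one_sub_cos_eq_re (u c τ : ℝ) :
    Real.exp (-(τ * u)) * (1 - Real.cos (c * τ))
      = (Complex.exp (((-u : ℝ) : ℂ) * τ) - Complex.exp ((-u + c * Complex.I) * τ)).re := by
  rw [Complex.sub_re, Complex.exp_re, Complex.exp_re]
  simp only [Complex.mul_re, Complex.mul_im, Complex.add_re, Complex.add_im, Complex.neg_re,
    Complex.neg_im, Complex.ofReal_re, Complex.ofReal_im, Complex.I_re, Complex.I_im, mul_zero,
    mul_one, sub_zero, add_zero, zero_mul, Real.cos_zero, neg_zero, zero_add]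
  ring_nf

lemma integral_exp_neg_mul_one_sub_cos (hu : 0 < u) (c : ℝ) :
    ∫ τ in Ioi (0 : ℝ), Real.exp (-(τ * u)) * (1 - Real.cos (c * τ))
      = c ^ 2 / (u * (u ^ 2 + c ^ 2)) := by
  have hre₁ : (((-u : ℝ) : ℂ)).re < 0 := by simpa using hu
  have hre₂ : (-u + c * Complex.I : ℂ).re < 0 := by simpa using hu
  have hint₁ := integrableOn_exp_mul_complex_Ioi hre₁ 0
  have hint₂ := integrableOn_exp_mul_complex_Ioi hre₂ 0
  simp only [exp_neg_mul_one_sub_cos_eq_re]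
  refine (integral_re (𝕜 := ℂ) (hint₁.sub hint₂)).trans ?_
  rw [integral_sub' hint₁ hint₂, integral_exp_mul_complex_Ioi hre₁,
    integral_exp_mul_complex_Ioi hre₂]
  have : u * u + c * c ≠ 0 :=
    (add_pos_of_pos_of_nonneg (mul_pos hu hu) (mul_self_nonneg c)).ne'
  simp only [Complex.ofReal_neg, Complex.ofReal_zero, mul_zero, Complex.exp_zero,
    neg_div_neg_eq, one_div, RCLike.re_to_complex, Complex.sub_re, Complex.inv_re,
    Complex.ofReal_re, Complex.normSq_apply, Complex.ofReal_im, add_zero, div_self_mul_self',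
    Complex.div_re, Complex.neg_re, Complex.one_re, Complex.add_re, Complex.mul_re,
    Complex.I_re, Complex.I_im, mul_one, sub_self, mul_neg, neg_mul, one_mul, neg_neg,
    Complex.add_im, Complex.neg_im, neg_zero, Complex.mul_im, zero_add, Complex.one_im, zero_mul,
    zero_div]
  field_simp
  ring

lemma rpow_sub_div_eq_integral_one_sub_cos (ha : 0 < a) {x : ℝ} (hx : 0 < x) :
    x ^ (α - β) / (x ^ α + a) = ∫ τ in Ioi (0 : ℝ), (1 - Real.cos (√a * τ)) / a
      * x ^ (-(β - 3 * (α / 2))) * Real.exp (-(τ * x ^ (α / 2))) := by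
  have hx2 : 0 < x ^ (α / 2) := by positivity
  have hsq : (x ^ (α / 2)) ^ 2 = x ^ α := by
    rw [← Real.rpow_natCast, ← Real.rpow_mul hx.le]
    norm_num
  have hpow : x ^ (α - β) * x ^ (α / 2) = x ^ (-(β - 3 * (α / 2))) := by
    rw [← Real.rpow_add hx]
    ring_nf
  calc x ^ (α - β) / (x ^ α + a)
      = x ^ (-(β - 3 * (α / 2))) / a
          * ((√a) ^ 2 / (x ^ (α / 2) * ((x ^ (α / 2)) ^ 2 + (√a) ^ 2))) := by
        rw [hsq, Real.sq_sqrt ha.le, ← hpow]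
        have : 0 < x ^ α := by positivity
        field_simp
    _ = _ := by
      rw [← integral_exp_neg_mul_one_sub_cos hx2, ← integral_const_mul]
      congr 1 with τ
      ring

/-- With `κ = α / 2`, the Laplace transform `x ^ (α - β) / (x ^ α + a)` is a superposition with
nonnegative weights `1 - cos (√a τ)` of the functions `x ^ (3κ - β) exp (-τ x ^ κ)`, which are
completely monotone because `κ ≤ 1` and `3κ ≤ β`. -/
theorem mlKernel_nonneg (hα : 1 ≤ α) (hα2 : α ≤ 2) (hβ : 3 * (α / 2) ≤ β) (ha : 0 < a)
    (ht : 0 < t) : 0 ≤ mlKernel α β a t := by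
  set l : ℝ := max 1 (2 * a)
  have hl : ∀ x ≥ l, 0 < x ∧ |a| < x ^ α := by
    intro x hx
    obtain ⟨hx1, hxa⟩ := max_le_iff.1 hx
    refine ⟨by linarith, ?_⟩
    rw [abs_of_pos ha]
    linarith [Real.self_le_rpow_of_one_le hx1 hα]
  let G (x τ : ℝ) : ℝ := (1 - Real.cos (√a * τ)) / a * x ^ (-(β - 3 * (α / 2)))
    * Real.exp (-(τ * x ^ (α / 2)))
  have hG : ∀ x > 0, x ^ (α - β) / (x ^ α + a) = ∫ τ in Ioi (0 : ℝ), G x τ := fun x hx =>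
    rpow_sub_div_eq_integral_one_sub_cos ha hx
  have hlaplace : ∀ x ≥ l, ∫ t in Ioi (0 : ℝ), Real.exp (-(x * t)) * mlKernel α β a t
      = ∫ τ in Ioi (0 : ℝ), G x τ := fun x hx =>
    (integral_exp_neg_mul_mlKernel hα (by linarith) (hl x hx).1 (hl x hx).2).trans
      (hG x (hl x hx).1)
  have hne : ∀ x > 0, ∫ τ in Ioi (0 : ℝ), G x τ ≠ 0 := fun x hx => by
    rw [← hG x hx]
    positivity
  refine nonneg_of_fwdDiff_laplace_nonneg (l := l) (continuousOn_mlKernel hα (by linarith))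
    (fun x hx => .of_integral_ne_zero (hlaplace x hx ▸ hne x (hl x hx).1)) (fun n x hx => ?_) ht
  rw [fwdDiff_iter_congr (g := fun x => ∫ τ in Ioi (0 : ℝ), G x τ) n fun k =>
    hlaplace _ (le_add_of_le_of_nonneg hx (by simp))]
  refine fwdDiff_iter_integral_nonneg n zero_le_one (hl x hx).1
    (fun y hy => .of_integral_ne_zero (hne y hy)) ?_
  filter_upwards [ae_restrict_mem measurableSet_Ioi] with τ hτ
  exact (CompletelyMonotoneUpTo.const_mul_rpow_neg n
    (div_nonneg (sub_nonneg.2 (Real.cos_le_one _)) ha.le) (by linarith)).mul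
    (CompletelyMonotoneUpTo.exp_neg_mul_rpow n (le_of_lt hτ) (by linarith) (by linarith))

end MittagLefflerPositivity

section Laplace

/-- The Laplace transform of `u : ℝ → E` at a complex point; only the values of `u` on `(0, ∞)`
matter. Meaningful where `LaplaceConvergent u s`. -/
noncomputable def laplace {E : Type*} [NormedAddCommGroup E] [NormedSpace ℂ E] (u : ℝ → E)
    (s : ℂ) : E :=
  ∫ t in Ioi (0 : ℝ), Complex.exp (-(s * t)) • u t

/-- Absolute convergence of the integral defining the Laplace transform of `u` at `s`. -/
def LaplaceConvergent {E : Type*} [NormedAddCommGroup E] [NormedSpace ℂ E] (u : ℝ → E)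
    (s : ℂ) : Prop :=
  IntegrableOn (fun t : ℝ => Complex.exp (-(s * t)) • u t) (Ioi 0)

variable {E : Type*} [NormedAddCommGroup E] [NormedSpace ℂ E] {u : ℝ → E} {s s' : ℂ} {l : ℝ}

lemma norm_exp_neg_mul_ofReal (s : ℂ) (t : ℝ) :
    ‖Complex.exp (-(s * t))‖ = Real.exp (-(s.re * t)) := by
  rw [Complex.norm_exp, Complex.neg_re, Complex.re_mul_ofReal]

lemma LaplaceConvergent.aestronglyMeasurable (h : LaplaceConvergent u s) :
    AEStronglyMeasurable u (volume.restrict (Ioi 0)) := by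
  have hexp : Continuous fun t : ℝ => Complex.exp (s * t) := by fun_prop
  have hprod : AEStronglyMeasurable (fun t : ℝ => Complex.exp (-(s * t)) • u t)
      (volume.restrict (Ioi 0)) := Integrable.aestronglyMeasurable h
  refine (hexp.aestronglyMeasurable.smul hprod).congr (ae_of_all _ fun t => ?_)
  simp only [Pi.smul_apply', smul_smul, ← Complex.exp_add, add_neg_cancel, Complex.exp_zero,
    one_smul]

lemma LaplaceConvergent.mono_re (h : LaplaceConvergent u s) (hs : s.re ≤ s'.re) :
    LaplaceConvergent u s' := by
  have hexp : Continuous fun t : ℝ => Complex.exp (-(s' * t)) := by fun_prop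
  refine h.norm.mono' (hexp.aestronglyMeasurable.smul h.aestronglyMeasurable) ?_
  filter_upwards [ae_restrict_mem measurableSet_Ioi] with t ht
  have ht : 0 < t := ht
  simp only [norm_smul, norm_exp_neg_mul_ofReal]
  gcongr

lemma norm_exp_neg_mul_smul_smul_le {δ t : ℝ} (hδ : 0 < δ) (ht : 0 < t)
    (hs : s.re + δ < s'.re) (v : E) :
    ‖Complex.exp (-(s' * t)) • t • v‖ ≤ δ⁻¹ * ‖Complex.exp (-(s * t)) • v‖ := by
  have hlin : t ≤ δ⁻¹ * Real.exp (δ * t) := by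
    rw [← div_le_iff₀' (inv_pos.2 hδ), div_inv_eq_mul, mul_comm]
    linarith [Real.add_one_le_exp (δ * t)]
  simp only [norm_smul, norm_exp_neg_mul_ofReal, Real.norm_of_nonneg ht.le]
  calc Real.exp (-(s'.re * t)) * (t * ‖v‖)
      ≤ Real.exp (-((s.re + δ) * t)) * (δ⁻¹ * Real.exp (δ * t) * ‖v‖) := by gcongr
    _ = δ⁻¹ * (Real.exp (-((s.re + δ) * t) + δ * t) * ‖v‖) := by
      rw [Real.exp_add]
      ring
    _ = δ⁻¹ * (Real.exp (-(s.re * t)) * ‖v‖) := by ring_nf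

lemma LaplaceConvergent.hasDerivAt (h : LaplaceConvergent u s) (hs : s.re < s'.re) :
    LaplaceConvergent (fun t => t • u t) s' ∧
      HasDerivAt (laplace u) (-laplace (fun t => t • u t) s') s' := by
  obtain ⟨δ, hδ, hsδ⟩ : ∃ δ > 0, s.re + δ < s'.re :=
    ⟨(s'.re - s.re) / 2, by linarith, by linarith⟩
  have hexp (z : ℂ) : Continuous fun t : ℝ => Complex.exp (-(z * t)) := by fun_prop
  have hmeas := h.aestronglyMeasurable
  have hderiv := hasDerivAt_integral_of_dominated_loc_of_deriv_le
    (F := fun (z : ℂ) (t : ℝ) => Complex.exp (-(z * t)) • u t)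
    (F' := fun (z : ℂ) (t : ℝ) => -(Complex.exp (-(z * t)) • t • u t))
    ((isOpen_lt continuous_const Complex.continuous_re).mem_nhds hsδ)
    (.of_forall fun z => (hexp z).aestronglyMeasurable.smul hmeas) (h.mono_re hs.le)
    ((hexp s').aestronglyMeasurable.smul (continuous_id.aestronglyMeasurable.smul hmeas)).neg
    ((ae_restrict_mem measurableSet_Ioi).mono fun t ht z hz =>
      (norm_neg _).trans_le (norm_exp_neg_mul_smul_smul_le hδ ht hz (u t)))
    (Integrable.const_mul (Integrable.norm h) _) (ae_of_all _ fun t z _ => ?_)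
  · exact ⟨hderiv.1.neg.congr (ae_of_all _ fun t => neg_neg _),
      hderiv.2.congr_deriv (integral_neg _)⟩
  · refine (((hasDerivAt_id z).mul_const (t : ℂ)).fun_neg.cexp.smul_const (u t)).congr_deriv ?_
    simp only [id_eq, one_mul, mul_neg, neg_smul, mul_smul, Complex.coe_smul]

lemma differentiableOn_laplace (h : ∀ x > l, LaplaceConvergent u x) :
    DifferentiableOn ℂ (laplace u) {s | l < s.re} := fun s hs => by
  obtain ⟨x, hlx, hxs⟩ := exists_between (show l < s.re from hs)
  exact ((h x hlx).hasDerivAt hxs).2.differentiableAt.differentiableWithinAt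

lemma laplace_eqOn [CompleteSpace E] {F : ℂ → E} {m : ℝ} (h : ∀ x > l, LaplaceConvergent u x)
    (hF : DifferentiableOn ℂ F {s | l < s.re}) (heq : ∀ x : ℝ, m < x → laplace u x = F x) :
    EqOn (laplace u) F {s | l < s.re} := by
  have hopen : IsOpen {s : ℂ | l < s.re} := isOpen_lt continuous_const Complex.continuous_re
  set x₀ : ℝ := max l m + 1
  have hx₀ : l < x₀ ∧ m < x₀ := max_lt_iff.1 (lt_add_one _)
  refine AnalyticOnNhd.eqOn_of_preconnected_of_frequently_eq (z₀ := (x₀ : ℂ))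
    ((differentiableOn_laplace h).analyticOnNhd hopen) (hF.analyticOnNhd hopen)
    (convex_halfSpace_re_gt l).isPreconnected hx₀.1 ?_
  have hofReal : Tendsto ((↑) : ℝ → ℂ) (𝓝[>] x₀) (𝓝[≠] (x₀ : ℂ)) :=
    Complex.continuous_ofReal.continuousWithinAt.tendsto_nhdsWithin fun x hx =>
      Complex.ofReal_injective.ne (ne_of_gt hx)
  refine hofReal.frequently (Eventually.frequently ?_)
  filter_upwards [self_mem_nhdsWithin] with x hx
  exact heq x (hx₀.2.trans hx)

end Laplace

section MittagLefflerLaplace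

variable {α β a t x : ℝ}

lemma laplaceConvergent_ofReal_iff {u : ℝ → ℝ} :
    LaplaceConvergent (fun t => (u t : ℂ)) x ↔
      IntegrableOn (fun t => Real.exp (-(x * t)) * u t) (Ioi 0) := by
  have hcast : (fun t : ℝ => Complex.exp (-((x : ℂ) * t)) • (u t : ℂ))
      = fun t => ((Real.exp (-(x * t)) * u t : ℝ) : ℂ) := by
    ext t
    push_cast
    rfl
  rw [LaplaceConvergent, hcast]
  exact ⟨fun h => h.re, fun h => h.ofReal⟩

lemma laplace_ofReal (u : ℝ → ℝ) (x : ℝ) :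
    laplace (fun t => (u t : ℂ)) x
      = ((∫ t in Ioi (0 : ℝ), Real.exp (-(x * t)) * u t : ℝ) : ℂ) := by
  simp only [laplace, ← integral_complex_ofReal, smul_eq_mul, Complex.ofReal_mul,
    Complex.ofReal_exp, Complex.ofReal_neg]

lemma mlKernel_le_rlKernel (hα : 1 ≤ α) (hα2 : α ≤ 2) (hβ : α / 2 ≤ β) (ha : 0 < a)
    (ht : 0 < t) : mlKernel α β a t ≤ rlKernel β t := by
  rw [mlKernel_eq_sub hα (by linarith) ht]
  exact sub_le_self _ (mul_nonneg ha.le (mlKernel_nonneg hα hα2 (by linarith) ha ht))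

lemma integrableOn_exp_neg_mul_mlKernel (hα : 1 ≤ α) (hα2 : α ≤ 2) (hβ : 0 < β) (ha : 0 < a)
    (hx : 0 < x) : IntegrableOn (fun t => Real.exp (-(x * t)) * mlKernel α β a t) (Ioi 0) := by
  have hlarge : ∀ β, 3 * (α / 2) ≤ β →
      IntegrableOn (fun t => Real.exp (-(x * t)) * mlKernel α β a t) (Ioi 0) := by
    intro β hβ
    refine (integrableOn_exp_neg_mul_rlKernel (by linarith) hx).mono'
      (ContinuousOn.aestronglyMeasurable ?_ measurableSet_Ioi) ?_
    · exact Continuous.continuousOn (by fun_prop) |>.mul (continuousOn_mlKernel hα (by linarith))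
    · filter_upwards [ae_restrict_mem measurableSet_Ioi] with t ht
      rw [Real.norm_of_nonneg
        (mul_nonneg (Real.exp_pos _).le (mlKernel_nonneg hα hα2 hβ ha ht))]
      gcongr
      exact mlKernel_le_rlKernel hα hα2 (by linarith) ha ht
  have hstep : ∀ β > 0,
      IntegrableOn (fun t => Real.exp (-(x * t)) * mlKernel α (α + β) a t) (Ioi 0) →
      IntegrableOn (fun t => Real.exp (-(x * t)) * mlKernel α β a t) (Ioi 0) := by
    intro β hβ h
    refine ((integrableOn_exp_neg_mul_rlKernel hβ hx).sub (h.const_mul a)).congr_fun ?_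
      measurableSet_Ioi
    intro t ht
    simp only [Pi.sub_apply, mlKernel_eq_sub hα hβ ht]
    ring
  exact hstep β hβ (hstep (α + β) (by linarith) (hlarge _ (by linarith)))

lemma laplaceConvergent_mlKernel (hα : 1 ≤ α) (hα2 : α ≤ 2) (hβ : 0 < β) (ha : 0 < a)
    (hx : 0 < x) : LaplaceConvergent (fun t => (mlKernel α β a t : ℂ)) x :=
  laplaceConvergent_ofReal_iff.2 (integrableOn_exp_neg_mul_mlKernel hα hα2 hβ ha hx)

end MittagLefflerLaplace

section Sector

variable {α a q : ℝ} {s z : ℂ}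

lemma sqrt_one_sub_mul_max_le_norm_add (hq : 0 ≤ q) (hq1 : q ≤ 1) (ha : 0 ≤ a)
    (hz : -(q * ‖z‖) ≤ z.re) : √(1 - q) * max ‖z‖ a ≤ ‖z + a‖ := by
  have hsq : ‖z + a‖ ^ 2 = ‖z‖ ^ 2 + 2 * a * z.re + a ^ 2 := by
    simp only [Complex.sq_norm, Complex.normSq_apply, Complex.add_re, Complex.add_im,
      Complex.ofReal_re, Complex.ofReal_im]
    ring
  have hmax : max ‖z‖ a ^ 2 ≤ ‖z‖ ^ 2 + a ^ 2 := by
    rcases max_choice ‖z‖ a with h | h <;> rw [h] <;> simp [sq_nonneg]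
  refine le_of_sq_le_sq ?_ (norm_nonneg _)
  rw [mul_pow, Real.sq_sqrt (by linarith), hsq]
  nlinarith [mul_le_mul_of_nonneg_left hz ha, mul_nonneg hq (sq_nonneg (‖z‖ - a))]

lemma norm_rpow_mul_cos_le_re_cpow (hα : 0 ≤ α) (hα2 : α ≤ 2) (hs : 0 < s.re) :
    ‖s‖ ^ α * Real.cos (α * (Real.pi / 2)) ≤ (s ^ (α : ℂ)).re := by
  have hs0 : s ≠ 0 := fun h => by simp [h] at hs
  have harg : |s.arg| ≤ Real.pi / 2 := Complex.abs_arg_le_pi_div_two_iff.2 hs.le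
  have hre : (s ^ (α : ℂ)).re = ‖s‖ ^ α * Real.cos (α * |s.arg|) := by
    rw [← Real.cos_abs (α * _), abs_mul, abs_abs, ← abs_mul, Real.cos_abs,
      ← Complex.norm_cpow_real, Complex.cpow_def_of_ne_zero hs0, Complex.exp_re, Complex.norm_exp,
      Complex.re_mul_ofReal, Complex.im_mul_ofReal, Complex.log_im, mul_comm s.arg]
  rw [hre]
  gcongr
  exact Real.cos_le_cos_of_nonneg_of_le_pi (by positivity) (by nlinarith [Real.pi_pos])
    (by gcongr)

/-- For `α < 2`, `s ^ α` maps the right half plane into a sector avoiding the negative axis, so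
that there is no cancellation in `s ^ α + a`. -/
lemma exists_mul_max_le_norm_cpow_add (hα : 1 ≤ α) (hα2 : α < 2) (ha : 0 ≤ a) :
    ∃ c > 0, ∀ s : ℂ, 0 < s.re → c * max (‖s‖ ^ α) a ≤ ‖s ^ (α : ℂ) + a‖ := by
  set q : ℝ := -Real.cos (α * (Real.pi / 2))
  have hπ := Real.pi_pos
  have hq : 0 ≤ q := neg_nonneg.2 <|
    Real.cos_nonpos_of_pi_div_two_le_of_le (by nlinarith) (by nlinarith)
  have hq1 : q < 1 := by
    have hcos : Real.cos Real.pi < Real.cos (α * (Real.pi / 2)) :=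
      Real.cos_lt_cos_of_nonneg_of_le_pi (by positivity) le_rfl (by nlinarith)
    rw [Real.cos_pi] at hcos
    exact neg_lt.1 hcos
  refine ⟨√(1 - q), Real.sqrt_pos.2 (by linarith), fun s hs => ?_⟩
  rw [← Complex.norm_cpow_real]
  refine sqrt_one_sub_mul_max_le_norm_add hq hq1.le ha ?_
  rw [Complex.norm_cpow_real]
  linarith [norm_rpow_mul_cos_le_re_cpow (by linarith : 0 ≤ α) hα2.le hs]

lemma cpow_add_ne_zero (hα : 1 ≤ α) (hα2 : α < 2) (ha : 0 < a) (hs : 0 < s.re) :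
    s ^ (α : ℂ) + a ≠ 0 := by
  obtain ⟨c, hc, hbound⟩ := exists_mul_max_le_norm_cpow_add hα hα2 ha.le
  exact norm_pos_iff.1 (lt_of_lt_of_le (by positivity) (hbound s hs))

end Sector

section MittagLefflerTransform

variable {α β a : ℝ} {s : ℂ}

lemma hasDerivAt_cpow_div_cpow_add (hα : 1 ≤ α) (hα2 : α < 2) (ha : 0 < a) (hs : 0 < s.re) :
    HasDerivAt (fun s : ℂ => s ^ (α - β : ℂ) / (s ^ (α : ℂ) + a))
      (((α - β) * s ^ (α - β - 1 : ℂ) * (s ^ (α : ℂ) + a)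
        - s ^ (α - β : ℂ) * (α * s ^ (α - 1 : ℂ))) / (s ^ (α : ℂ) + a) ^ 2) s := by
  have hslit : s ∈ Complex.slitPlane := .inl hs
  have hpow (c : ℂ) : HasDerivAt (fun s : ℂ => s ^ c) (c * s ^ (c - 1)) s := by
    simpa only [id, mul_one] using (hasDerivAt_id s).cpow_const (c := c) hslit
  exact (hpow _).fun_div ((hpow α).add_const _) (cpow_add_ne_zero hα hα2 ha hs)

lemma laplace_mlKernel (hα : 1 ≤ α) (hα2 : α < 2) (hβ : 0 < β) (ha : 0 < a) (hs : 0 < s.re) :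
    laplace (fun t => (mlKernel α β a t : ℂ)) s = s ^ (α - β : ℂ) / (s ^ (α : ℂ) + a) := by
  refine laplace_eqOn (l := 0) (m := max 1 a)
    (F := fun s => s ^ (α - β : ℂ) / (s ^ (α : ℂ) + a))
    (fun x hx => laplaceConvergent_mlKernel hα hα2.le hβ ha hx)
    (fun s hs => (hasDerivAt_cpow_div_cpow_add hα hα2 ha hs).differentiableAt
      |>.differentiableWithinAt) (fun x hx => ?_) hs
  obtain ⟨hx1, hxa⟩ := max_lt_iff.1 hx
  have hx0 : 0 < x := one_pos.trans hx1
  have hxα : |a| < x ^ α := by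
    rw [abs_of_pos ha]
    exact hxa.trans_le (Real.self_le_rpow_of_one_le hx1.le hα)
  rw [laplace_ofReal, integral_exp_neg_mul_mlKernel hα hβ hx0 hxα]
  push_cast [Complex.ofReal_cpow hx0.le]
  rfl

lemma laplace_smul_mlKernel (hα : 1 ≤ α) (hα2 : α < 2) (hβ : 0 < β) (ha : 0 < a)
    (hs : 0 < s.re) :
    laplace (fun t => t • (mlKernel α β a t : ℂ)) s
      = -(((α - β) * s ^ (α - β - 1 : ℂ) * (s ^ (α : ℂ) + a)
        - s ^ (α - β : ℂ) * (α * s ^ (α - 1 : ℂ))) / (s ^ (α : ℂ) + a) ^ 2) := by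
  have hconv := laplaceConvergent_mlKernel (β := β) hα hα2.le hβ ha (half_pos hs)
  have heq : laplace (fun t => (mlKernel α β a t : ℂ))
      =ᶠ[𝓝 s] fun s => s ^ (α - β : ℂ) / (s ^ (α : ℂ) + a) := by
    filter_upwards [(isOpen_lt continuous_const Complex.continuous_re).mem_nhds hs] with z hz
    exact laplace_mlKernel hα hα2 hβ ha hz
  rw [eq_neg_iff_add_eq_zero, ← neg_eq_iff_add_eq_zero]
  exact (hconv.hasDerivAt (by simpa using hs)).2.unique
    ((hasDerivAt_cpow_div_cpow_add hα hα2 ha hs).congr_of_eventuallyEq heq)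

lemma add_div_sq_le_of_mul_max_le {c r D : ℝ} (hα : 0 ≤ α) (ha : 0 < a) (hc : 0 < c) (hr : 0 < r)
    (hD : c * max (r ^ α) a ≤ D) :
    (|α - β| * r ^ (α - β - 1) * D + r ^ (α - β) * (α * r ^ (α - 1))) / D ^ 2
      ≤ (|α - β| / c + α / c ^ 2) * (r ^ (α - β - 1) / max (r ^ α) a) := by
  set m : ℝ := max (r ^ α) a
  have hm : 0 < m := lt_max_of_lt_right ha
  have hD0 : 0 < D := (mul_pos hc hm).trans_le hD
  have hpow : r ^ (α - β) * r ^ (α - 1) = r ^ (α - β - 1) * r ^ α := by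
    rw [← Real.rpow_add hr, ← Real.rpow_add hr]
    ring_nf
  calc (|α - β| * r ^ (α - β - 1) * D + r ^ (α - β) * (α * r ^ (α - 1))) / D ^ 2
      = r ^ (α - β - 1) * (|α - β| / D + α * r ^ α / D ^ 2) := by
        field_simp
        linear_combination α * hpow
    _ ≤ r ^ (α - β - 1) * (|α - β| / (c * m) + α * m / (c * m) ^ 2) := by
        gcongr
        exact le_max_left _ _
    _ = (|α - β| / c + α / c ^ 2) * (r ^ (α - β - 1) / m) := by
        field_simp

/-- The factor `t` keeps the transform integrable along vertical lines: it gains one order of decay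
at infinity, whereas the singularity at `0` stays integrable for `β < α`. -/
lemma exists_norm_laplace_smul_mlKernel_le (hα : 1 ≤ α) (hα2 : α < 2) (hβ : 0 < β) (ha : 0 < a) :
    ∃ C > 0, ∀ s : ℂ, 0 < s.re → ‖laplace (fun t => t • (mlKernel α β a t : ℂ)) s‖
      ≤ C * (‖s‖ ^ (α - β - 1) / max (‖s‖ ^ α) a) := by
  obtain ⟨c, hc, hbound⟩ := exists_mul_max_le_norm_cpow_add hα hα2 ha.le
  refine ⟨|α - β| / c + α / c ^ 2, by positivity, fun s hs => ?_⟩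
  have hr : 0 < ‖s‖ := norm_pos_iff.2 fun h => by simp [h] at hs
  have hcpow (r : ℝ) : ‖s ^ (r : ℂ)‖ = ‖s‖ ^ r := Complex.norm_cpow_real s r
  rw [laplace_smul_mlKernel hα hα2 hβ ha hs, norm_neg]
  norm_cast
  refine le_trans ?_ (add_div_sq_le_of_mul_max_le (by linarith) ha hc hr (hbound s hs))
  rw [norm_div, norm_pow]
  gcongr
  refine (norm_sub_le _ _).trans_eq ?_
  simp only [norm_mul, hcpow, Complex.norm_real, Real.norm_eq_abs,
    abs_of_nonneg (by linarith : 0 ≤ α)]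

end MittagLefflerTransform

section Inversion

open scoped FourierTransform

variable {E : Type*} [NormedAddCommGroup E] [NormedSpace ℂ E] {u : ℝ → E} {G : ℝ → ℝ} {t x : ℝ}

lemma fourier_indicator_exp_neg_mul_smul (u : ℝ → E) (x ξ : ℝ) :
    𝓕 ((Ioi 0).indicator fun t : ℝ => Complex.exp (-(x * t)) • u t) ξ
      = laplace u (x + (2 * Real.pi * ξ : ℝ) * Complex.I) := by
  rw [Real.fourier_real_eq_integral_exp_smul, laplace, ← integral_indicator measurableSet_Ioi]
  congr 1 with t
  by_cases ht : t ∈ Ioi (0 : ℝ)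
  · rw [indicator_of_mem ht, indicator_of_mem ht, smul_smul, ← Complex.exp_add]
    congr 2
    push_cast
    ring
  · rw [indicator_of_notMem ht, indicator_of_notMem ht, smul_zero]

lemma exp_neg_mul_mul_norm_le_integral_of_laplace [CompleteSpace E]
    (hconv : LaplaceConvergent u x) (hG : Integrable G)
    (hbound : ∀ᵐ y : ℝ, ‖laplace u (x + y * Complex.I)‖ ≤ G y) (ht : 0 < t)
    (hu : ContinuousAt u t) :
    Real.exp (-(x * t)) * ‖u t‖ ≤ (2 * Real.pi)⁻¹ * ∫ y, G y := by
  set g : ℝ → E := (Ioi 0).indicator fun t : ℝ => Complex.exp (-(x * t)) • u t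
  have hg : Integrable g := (integrable_indicator_iff measurableSet_Ioi).2 hconv
  have hgt : g =ᶠ[𝓝 t] fun t => Complex.exp (-(x * t)) • u t := by
    filter_upwards [Ioi_mem_nhds ht] with τ hτ
    exact indicator_of_mem hτ _
  have hcont : ContinuousAt g t := by
    refine ContinuousAt.congr (ContinuousAt.smul ?_ hu) hgt.symm
    exact Continuous.continuousAt (by fun_prop)
  have h2π : (2 * Real.pi) ≠ 0 := by positivity
  have hle : ∀ᵐ ξ : ℝ, ‖𝓕 g ξ‖ ≤ G (2 * Real.pi * ξ) := by
    have hscale := (Measure.quasiMeasurePreserving_smul volume h2π).tendsto_ae.eventually hbound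
    filter_upwards [hscale] with ξ hξ
    rw [fourier_indicator_exp_neg_mul_smul]
    exact hξ
  have hFcont : Continuous (𝓕 g) := VectorFourier.fourierIntegral_continuous
    (L := innerₗ ℝ) Real.continuous_fourierChar continuous_inner hg
  have hFg : Integrable (𝓕 g) := (hG.comp_mul_left' h2π).mono' hFcont.aestronglyMeasurable hle
  calc Real.exp (-(x * t)) * ‖u t‖ = ‖g t‖ := by
        rw [hgt.self_of_nhds, norm_smul, norm_exp_neg_mul_ofReal, Complex.ofReal_re]
    _ = ‖𝓕⁻ (𝓕 g) t‖ := by rw [hg.fourierInv_fourier_eq hFg hcont]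
    _ ≤ ∫ ξ, ‖𝓕 g ξ‖ := by
      rw [Real.fourierInv_eq_fourier_neg]
      exact VectorFourier.norm_fourierIntegral_le_integral_norm _ _ _ _ _
    _ ≤ ∫ ξ, G (2 * Real.pi * ξ) := integral_mono_ae hFg.norm (hG.comp_mul_left' h2π) hle
    _ = (2 * Real.pi)⁻¹ * ∫ y, G y := by
      rw [Measure.integral_comp_mul_left, abs_of_pos (by positivity), smul_eq_mul]

lemma norm_le_integral_of_laplace [CompleteSpace E] (hconv : ∀ x > 0, LaplaceConvergent u (x : ℝ))
    (hG : Integrable G)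
    (hbound : ∀ x : ℝ, 0 < x → ∀ᵐ y : ℝ, ‖laplace u (x + y * Complex.I)‖ ≤ G y) (ht : 0 < t)
    (hu : ContinuousAt u t) :
    ‖u t‖ ≤ (2 * Real.pi)⁻¹ * ∫ y, G y := by
  have hlim : Tendsto (fun x => Real.exp (-(x * t)) * ‖u t‖) (𝓝[>] 0) (𝓝 ‖u t‖) := by
    have hcont : Continuous fun x => Real.exp (-(x * t)) * ‖u t‖ := by fun_prop
    simpa using hcont.continuousWithinAt.tendsto (x := 0) (s := Ioi 0)
  refine le_of_tendsto hlim ?_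
  filter_upwards [self_mem_nhdsWithin] with x hx
  exact exp_neg_mul_mul_norm_le_integral_of_laplace (hconv x hx) hG (hbound x hx) ht hu

end Inversion

section Decay

variable {α β δ θ a μ ν r : ℝ}

lemma rpow_div_max_rpow_le (hθ : 0 ≤ θ) (hθ1 : θ ≤ 1) (ha : 0 < a) (hr : 0 < r) :
    r ^ δ / max (r ^ α) a ≤ a ^ (θ - 1) * r ^ (δ - α * θ) := by
  have hm : 0 < max (r ^ α) a := lt_max_of_lt_right ha
  have hgeom : r ^ (α * θ) * a ^ (1 - θ) ≤ max (r ^ α) a :=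
    calc r ^ (α * θ) * a ^ (1 - θ) = (r ^ α) ^ θ * a ^ (1 - θ) := by rw [Real.rpow_mul hr.le]
      _ ≤ max (r ^ α) a ^ θ * max (r ^ α) a ^ (1 - θ) := by
        gcongr
        exacts [le_max_left _ _, le_max_right _ _]
      _ = max (r ^ α) a := by rw [← Real.rpow_add hm, add_sub_cancel, Real.rpow_one]
  rw [div_le_iff₀ hm]
  calc r ^ δ = a ^ (θ - 1) * r ^ (δ - α * θ) * (r ^ (α * θ) * a ^ (1 - θ)) := by
        rw [← neg_sub 1 θ, Real.rpow_neg ha.le, Real.rpow_sub hr]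
        field_simp
    _ ≤ a ^ (θ - 1) * r ^ (δ - α * θ) * max (r ^ α) a := by gcongr

lemma integrable_comp_abs {h : ℝ → ℝ} (hh : IntegrableOn h (Ioi 0)) :
    Integrable fun y => h |y| := by
  have hind : Integrable ((Ioi 0).indicator h) := (integrable_indicator_iff measurableSet_Ioi).2 hh
  refine (hind.add hind.comp_neg).congr ?_
  filter_upwards [compl_mem_ae_iff.2 (measure_singleton 0)] with y hy
  rcases lt_or_gt_of_ne (show y ≠ 0 from hy) with hy | hy
  · simp [abs_of_neg hy, hy, hy.le]
  · simp [abs_of_pos hy, hy, hy.le]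

lemma integrable_min_rpow_abs (hμ : μ < 1) (hν : 1 < ν) :
    Integrable fun y : ℝ => min (|y| ^ (-μ)) (|y| ^ (-ν)) := by
  have hmeas : Measurable fun y : ℝ => min (y ^ (-μ)) (y ^ (-ν)) := by fun_prop
  have hnorm {y : ℝ} (hy : 0 < y) :
      ‖min (y ^ (-μ)) (y ^ (-ν))‖ = min (y ^ (-μ)) (y ^ (-ν)) :=
    Real.norm_of_nonneg (by positivity)
  refine integrable_comp_abs (h := fun y => min (y ^ (-μ)) (y ^ (-ν))) ?_
  rw [← Ioc_union_Ioi_eq_Ioi zero_le_one]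
  refine IntegrableOn.union ?_ ?_
  · have hrpow : IntegrableOn (fun y : ℝ => y ^ (-μ)) (Ioc 0 1) :=
      (intervalIntegrable_iff_integrableOn_Ioc_of_le zero_le_one).1
        (intervalIntegral.intervalIntegrable_rpow' (by linarith))
    refine hrpow.mono' hmeas.aestronglyMeasurable ?_
    filter_upwards [ae_restrict_mem measurableSet_Ioc] with y hy
    exact (hnorm hy.1).trans_le (min_le_left _ _)
  · refine (integrableOn_Ioi_rpow_of_lt (neg_lt_neg hν) one_pos).mono'
      hmeas.aestronglyMeasurable ?_
    filter_upwards [ae_restrict_mem measurableSet_Ioi] with y hy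
    exact (hnorm (one_pos.trans hy)).trans_le (min_le_right _ _)

lemma exists_integrable_majorant (hα : 0 < α) (hβ : 0 < β) (hβα : β < α) (ha : 0 < a) :
    ∃ G : ℝ → ℝ, Integrable G ∧ ∀ y ≠ 0, ∀ r ≥ |y|,
      r ^ (α - β - 1) / max (r ^ α) a ≤ G y := by
  set θ : ℝ := max 0 ((α - β - 1) / α)
  set μ : ℝ := -(α - β - 1 - α * θ)
  have hαθ : α * θ = max 0 (α - β - 1) := by
    rw [mul_max_of_nonneg _ _ hα.le, mul_zero, mul_div_cancel₀ _ hα.ne']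
  have hθ : 0 ≤ θ := le_max_left _ _
  have hθ1 : θ ≤ 1 := max_le zero_le_one ((div_le_one hα).2 (by linarith))
  have hμ : 0 ≤ μ := by
    have := le_max_right 0 (α - β - 1)
    simp only [μ, hαθ]
    linarith
  have hμ1 : μ < 1 := by
    have : max 0 (α - β - 1) < α - β - 1 + 1 := max_lt (by linarith) (by linarith)
    simp only [μ, hαθ]
    linarith
  refine ⟨fun y => (a ^ (θ - 1) + 1) * min (|y| ^ (-μ)) (|y| ^ (-(1 + β))),
    (integrable_min_rpow_abs hμ1 (by linarith)).const_mul _, fun y hy r hr => ?_⟩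
  have hy : 0 < |y| := abs_pos.2 hy
  have hr0 : 0 < r := hy.trans_le hr
  simp only [mul_min_of_nonneg _ _ (by positivity : 0 ≤ a ^ (θ - 1) + 1)]
  refine le_min ((rpow_div_max_rpow_le hθ hθ1 ha hr0).trans ?_)
    ((rpow_div_max_rpow_le zero_le_one le_rfl ha hr0).trans ?_)
  · rw [← neg_neg (α - β - 1 - α * θ)]
    exact mul_le_mul (le_add_of_nonneg_right zero_le_one)
      (Real.rpow_le_rpow_of_nonpos hy hr (neg_nonpos.2 hμ)) (by positivity) (by positivity)
  · rw [sub_self, Real.rpow_zero, show α - β - 1 - α * 1 = -(1 + β) by ring]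
    exact mul_le_mul (le_add_of_nonneg_left (by positivity))
      (Real.rpow_le_rpow_of_nonpos hy hr (by linarith)) (by positivity) (by positivity)

theorem exists_abs_mlKernel_le_div (hα : 1 ≤ α) (hα2 : α < 2) (hβ : 0 < β) (hβα : β < α)
    (ha : 0 < a) : ∃ C, ∀ t > 0, |mlKernel α β a t| ≤ C / t := by
  obtain ⟨C, hC, hbound⟩ := exists_norm_laplace_smul_mlKernel_le hα hα2 hβ ha
  obtain ⟨G, hG, hGbound⟩ := exists_integrable_majorant (by linarith) hβ hβα ha
  refine ⟨(2 * Real.pi)⁻¹ * ∫ y, C * G y, fun t ht => ?_⟩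
  have hle := norm_le_integral_of_laplace (u := fun t => t • (mlKernel α β a t : ℂ)) (t := t)
    (fun x hx => ((laplaceConvergent_mlKernel hα hα2.le hβ ha (half_pos hx)).hasDerivAt
      (s' := x) (by simpa using hx)).1) (hG.const_mul C) (fun x hx => ?_) ht
    (continuousAt_id.smul (Complex.continuous_ofReal.continuousAt.comp
      ((continuousOn_mlKernel hα hβ).continuousAt (Ioi_mem_nhds ht))))
  · rwa [norm_smul, Real.norm_of_nonneg ht.le, Complex.norm_real, Real.norm_eq_abs, mul_comm,
      ← le_div_iff₀ ht] at hle
  · filter_upwards [compl_mem_ae_iff.2 (measure_singleton 0)] with y hy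
    refine (hbound _ (by simpa using hx)).trans ?_
    gcongr
    exact hGbound y hy _ (by simpa using Complex.abs_im_le_norm (x + y * Complex.I))

lemma tendsto_rpow_mul_mlKernel_nhds_zero (hα : 1 ≤ α) (hα2 : α < 2) (hβ : 0 < β) (hβα : β < α)
    (ha : 0 < a) : Tendsto (fun t => t ^ (α - 1) * mlKernel α β a t) atTop (𝓝 0) := by
  obtain ⟨C, hC⟩ := exists_abs_mlKernel_le_div hα hα2 hβ hβα ha
  have hlim : Tendsto (fun t : ℝ => C * t ^ (-(2 - α))) atTop (𝓝 0) := by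
    simpa using (tendsto_rpow_neg_atTop (sub_pos.2 hα2)).const_mul C
  refine squeeze_zero_norm' ?_ hlim
  filter_upwards [eventually_gt_atTop 0] with t ht
  rw [norm_mul, Real.norm_of_nonneg (by positivity), Real.norm_eq_abs]
  calc t ^ (α - 1) * |mlKernel α β a t| ≤ t ^ (α - 1) * (C / t) := by
        gcongr
        exact hC t ht
    _ = C * t ^ (-(2 - α)) := by
      rw [mul_div_left_comm, ← Real.rpow_sub_one ht.ne']
      ring_nf

lemma tendsto_rpow_mul_mlKernel_two (hα : 1 < α) (hα2 : α < 2) (ha : 0 < a) :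
    Tendsto (fun t => t ^ (α - 1) * mlKernel α 2 a t) atTop
      (𝓝 (1 / (a * Real.Gamma (2 - α)))) := by
  have hlim := ((tendsto_rpow_mul_mlKernel_nhds_zero hα.le hα2 (sub_pos.2 hα2) (by linarith)
    ha).const_mul a⁻¹).const_sub (1 / (a * Real.Gamma (2 - α)))
  rw [mul_zero, sub_zero] at hlim
  refine hlim.congr' ?_
  filter_upwards [eventually_gt_atTop 0] with t ht
  have hrec := mlKernel_eq_sub (a := a) hα.le (sub_pos.2 hα2) ht
  have hpow : t ^ (α - 1) * t ^ (2 - α - 1) = 1 := by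
    rw [← Real.rpow_add ht]
    ring_nf
    exact Real.rpow_zero t
  rw [add_sub_cancel, rlKernel] at hrec
  have hΓ : Real.Gamma (2 - α) ≠ 0 := (Real.Gamma_pos_of_pos (by linarith)).ne'
  rw [hrec]
  field_simp
  linear_combination -hpow

end Decay

section FractionalIntegral

variable {σ τ C r t : ℝ} {u v : ℝ → ℝ}

lemma rlInt_eq_integral_rlKernel (σ : ℝ) (u : ℝ → ℝ) (t : ℝ) :
    rlInt σ u t = ∫ s in (0 : ℝ)..t, rlKernel σ (t - s) * u s := by
  rw [rlInt, ← intervalIntegral.integral_const_mul]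
  congr 1 with s
  rw [rlKernel]
  ring

lemma rlInt_one (u : ℝ → ℝ) (t : ℝ) : rlInt 1 u t = ∫ s in (0 : ℝ)..t, u s := by
  simp [rlInt]

lemma rlInt_congr (ht : 0 ≤ t) (huv : ∀ᵐ s ∂volume.restrict (Ioc 0 t), u s = v s) :
    rlInt σ u t = rlInt σ v t := by
  simp only [rlInt, intervalIntegral.integral_of_le ht]
  congr 1
  exact integral_congr_ae (huv.mono fun s hs => congrArg ((t - s) ^ (σ - 1) * ·) hs)

lemma rlInt_rlKernel (hσ : 0 < σ) (hτ : 0 < τ) (ht : 0 < t) :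
    rlInt σ (rlKernel τ) t = rlKernel (σ + τ) t := by
  have hbeta : ∫ s in (0 : ℝ)..t, (s : ℂ) ^ ((τ : ℂ) - 1) * ((t : ℂ) - s) ^ ((σ : ℂ) - 1)
      = ((Real.Gamma τ * Real.Gamma σ / Real.Gamma (τ + σ) * t ^ (τ + σ - 1) : ℝ) : ℂ) := by
    rw [Complex.betaIntegral_scaled _ _ ht,
      Complex.betaIntegral_eq_Gamma_mul_div _ _ (by simpa) (by simpa), mul_comm]
    push_cast [Complex.ofReal_cpow ht.le, ← Complex.Gamma_ofReal]
    rfl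
  have hreal : ∫ s in (0 : ℝ)..t, s ^ (τ - 1) * (t - s) ^ (σ - 1)
      = Real.Gamma τ * Real.Gamma σ / Real.Gamma (τ + σ) * t ^ (τ + σ - 1) := by
    rw [← Complex.ofReal_inj, ← hbeta, ← intervalIntegral.integral_ofReal]
    refine intervalIntegral.integral_congr fun s hs => ?_
    rw [uIcc_of_le ht.le] at hs
    push_cast [Complex.ofReal_cpow hs.1, Complex.ofReal_cpow (sub_nonneg.2 hs.2)]
    rfl
  have hΓσ := (Real.Gamma_pos_of_pos hσ).ne'
  have hΓτ := (Real.Gamma_pos_of_pos hτ).ne'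
  calc rlInt σ (rlKernel τ) t
      = 1 / Real.Gamma σ *
          ∫ s in (0 : ℝ)..t, s ^ (τ - 1) * (t - s) ^ (σ - 1) / Real.Gamma τ := by
        simp only [rlInt, rlKernel, mul_div_assoc', mul_comm]
    _ = rlKernel (σ + τ) t := by
        rw [intervalIntegral.integral_div, hreal, rlKernel, add_comm τ σ]
        field_simp

lemma integral_rlKernel_mul_rlKernel (hσ : 0 < σ) (hτ : 0 < τ) (hrt : r < t) :
    ∫ s in r..t, rlKernel σ (t - s) * rlKernel τ (s - r) = rlKernel (σ + τ) (t - r) := by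
  rw [← rlInt_rlKernel hσ hτ (sub_pos.2 hrt), rlInt_eq_integral_rlKernel, ← sub_self r,
    ← intervalIntegral.integral_comp_sub_right]
  simp only [sub_sub_sub_cancel_right]

lemma intervalIntegrable_rlKernel_mul_rlKernel (hσ : 0 < σ) (hτ : 0 < τ) (hrt : r < t) :
    IntervalIntegrable (fun s => rlKernel σ (t - s) * rlKernel τ (s - r)) volume r t := by
  refine intervalIntegral.intervalIntegrable_of_integral_ne_zero ?_
  rw [integral_rlKernel_mul_rlKernel hσ hτ hrt]
  exact (div_pos (Real.rpow_pos_of_pos (sub_pos.2 hrt) _)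
    (Real.Gamma_pos_of_pos (add_pos hσ hτ))).ne'

lemma intervalIntegrable_rlKernel_mul (hσ : 1 ≤ σ) (hu : IntervalIntegrable u volume 0 t) :
    IntervalIntegrable (fun s => rlKernel σ (t - s) * u s) volume 0 t :=
  hu.continuousOn_mul (((Real.continuous_rpow_const (sub_nonneg.2 hσ)).comp
    (continuous_sub_left t)).div_const _).continuousOn

lemma abs_rlInt_le (hσ : 0 < σ) (hτ : 0 < τ) (ht : 0 < t)
    (hu : ∀ s ∈ Ioc 0 t, |u s| ≤ C * rlKernel τ s) :
    |rlInt σ u t| ≤ C * rlKernel (σ + τ) t := by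
  have hint := intervalIntegrable_rlKernel_mul_rlKernel hσ hτ ht
  simp only [sub_zero] at hint
  rw [← rlInt_rlKernel hσ hτ ht, rlInt_eq_integral_rlKernel, rlInt_eq_integral_rlKernel,
    ← intervalIntegral.integral_const_mul, ← Real.norm_eq_abs]
  refine intervalIntegral.norm_integral_le_of_norm_le ht.le ?_ (hint.const_mul C)
  refine ae_of_all _ fun s hs => ?_
  have hker := rlKernel_nonneg hσ (sub_nonneg.2 hs.2)
  rw [norm_mul, Real.norm_of_nonneg hker]
  exact (mul_le_mul_of_nonneg_left (hu s hs) hker).trans_eq (mul_left_comm _ _ _)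

end FractionalIntegral

section Triangle

variable {E : Type*} [NormedAddCommGroup E] {F : ℝ × ℝ → E} {a b : ℝ}

lemma integral_indicator_lt_left [NormedSpace ℝ E] {s : ℝ} (hs : s ∈ Ioc a b) :
    ∫ r in Ioc a b, {z : ℝ × ℝ | z.1 < z.2}.indicator F (r, s) = ∫ r in a..s, F (r, s) := by
  have hind : (fun r => {z : ℝ × ℝ | z.1 < z.2}.indicator F (r, s))
      = (Iio s).indicator fun r => F (r, s) := rfl
  have hset : Ioc a b ∩ Iio s = Ioo a s := by
    ext r
    exact ⟨fun h => ⟨h.1.1, h.2⟩, fun h => ⟨⟨h.1, h.2.le.trans hs.2⟩, h.2⟩⟩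
  rw [hind, setIntegral_indicator measurableSet_Iio, hset, ← integral_Ioc_eq_integral_Ioo,
    intervalIntegral.integral_of_le hs.1.le]

lemma restrict_Ioc_restrict_Ioi {r : ℝ} (hr : r ∈ Ioc a b) :
    (volume.restrict (Ioc a b)).restrict (Ioi r) = volume.restrict (Ioc r b) := by
  rw [Measure.restrict_restrict measurableSet_Ioi, inter_comm, Ioc_inter_Ioi,
    sup_eq_right.2 hr.1.le]

lemma integral_indicator_lt_right [NormedSpace ℝ E] {r : ℝ} (hr : r ∈ Ioc a b) :
    ∫ s in Ioc a b, {z : ℝ × ℝ | z.1 < z.2}.indicator F (r, s) = ∫ s in r..b, F (r, s) := by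
  have hind : (fun s => {z : ℝ × ℝ | z.1 < z.2}.indicator F (r, s))
      = (Ioi r).indicator fun s => F (r, s) := rfl
  rw [hind, integral_indicator measurableSet_Ioi, restrict_Ioc_restrict_Ioi hr,
    intervalIntegral.integral_of_le hr.2]

lemma integrableOn_indicator_lt_right {r : ℝ} (hr : r ∈ Ioc a b) :
    IntegrableOn (fun s => {z : ℝ × ℝ | z.1 < z.2}.indicator F (r, s)) (Ioc a b) ↔
      IntervalIntegrable (fun s => F (r, s)) volume r b := by
  have hind : (fun s => {z : ℝ × ℝ | z.1 < z.2}.indicator F (r, s))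
      = (Ioi r).indicator fun s => F (r, s) := rfl
  rw [hind, IntegrableOn, integrable_indicator_iff measurableSet_Ioi, IntegrableOn,
    restrict_Ioc_restrict_Ioi hr, intervalIntegrable_iff_integrableOn_Ioc_of_le hr.2, IntegrableOn]

lemma intervalIntegrable_integral_triangle [NormedSpace ℝ E] (hab : a ≤ b)
    (hF : IntegrableOn F {z | z.1 < z.2}
      ((volume.restrict (Ioc a b)).prod (volume.restrict (Ioc a b)))) :
    IntervalIntegrable (fun s => ∫ r in a..s, F (r, s)) volume a b := by
  rw [intervalIntegrable_iff_integrableOn_Ioc_of_le hab]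
  refine ((integrable_indicator_iff (measurableSet_lt measurable_fst measurable_snd)).2
    hF).integral_prod_right.congr ?_
  filter_upwards [ae_restrict_mem measurableSet_Ioc] with s hs
  exact integral_indicator_lt_left hs

lemma integral_integral_triangle_swap [NormedSpace ℝ E] (hab : a ≤ b)
    (hF : IntegrableOn F {z | z.1 < z.2}
      ((volume.restrict (Ioc a b)).prod (volume.restrict (Ioc a b)))) :
    ∫ s in a..b, ∫ r in a..s, F (r, s)
      = ∫ r in a..b, ∫ s in r..b, F (r, s) := by
  have hswap := integral_integral_swap (f := fun r s => {z : ℝ × ℝ | z.1 < z.2}.indicator F (r, s))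
    ((integrable_indicator_iff (measurableSet_lt measurable_fst measurable_snd)).2 hF)
  rw [intervalIntegral.integral_of_le hab, intervalIntegral.integral_of_le hab,
    ← setIntegral_congr_fun measurableSet_Ioc fun s hs => integral_indicator_lt_left hs,
    ← setIntegral_congr_fun measurableSet_Ioc fun r hr => integral_indicator_lt_right hr, hswap]

end Triangle

section Semigroup

variable {σ τ t : ℝ} {u v : ℝ → ℝ}

lemma integral_norm_rlKernel_mul_rlKernel_mul (hσ : 0 < σ) (hτ : 0 < τ) {r : ℝ} (hrt : r < t)
    (c : ℝ) :
    ∫ s in r..t, ‖rlKernel σ (t - s) * rlKernel τ (s - r) * c‖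
      = rlKernel (σ + τ) (t - r) * ‖c‖ := by
  rw [← integral_rlKernel_mul_rlKernel hσ hτ hrt, ← intervalIntegral.integral_mul_const]
  refine intervalIntegral.integral_congr fun s hs => ?_
  rw [uIcc_of_le hrt.le] at hs
  have hnonneg := mul_nonneg (rlKernel_nonneg hσ (sub_nonneg.2 hs.2))
    (rlKernel_nonneg hτ (sub_nonneg.2 hs.1))
  simp only [norm_mul _ c, Real.norm_of_nonneg hnonneg]

/-- `1 ≤ σ + τ` keeps the composed kernel bounded. This is what gives integrability for every `t`,
and with it the semigroup law at every `t` rather than almost everywhere. -/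
lemma integrableOn_triangle_rlKernel (hσ : 0 < σ) (hτ : 0 < τ) (hστ : 1 ≤ σ + τ) (ht : 0 ≤ t)
    (hu : IntervalIntegrable u volume 0 t) :
    IntegrableOn (fun z : ℝ × ℝ => rlKernel σ (t - z.2) * rlKernel τ (z.2 - z.1) * u z.1)
      {z | z.1 < z.2} ((volume.restrict (Ioc 0 t)).prod (volume.restrict (Ioc 0 t))) := by
  have hlt : MeasurableSet {z : ℝ × ℝ | z.1 < z.2} :=
    measurableSet_lt measurable_fst measurable_snd
  have hu' := (intervalIntegrable_iff_integrableOn_Ioc_of_le ht).1 hu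
  have hmeas : Measurable fun z : ℝ × ℝ => rlKernel σ (t - z.2) * rlKernel τ (z.2 - z.1) :=
    ((measurable_rlKernel σ).comp (measurable_snd.const_sub t)).mul
      ((measurable_rlKernel τ).comp (measurable_snd.sub measurable_fst))
  have hIoo : ∀ᵐ r ∂volume.restrict (Ioc 0 t), r ∈ Ioo 0 t := by
    rw [Measure.restrict_congr_set Ioo_ae_eq_Ioc.symm]
    exact ae_restrict_mem measurableSet_Ioo
  have haesm : AEStronglyMeasurable
      (fun z : ℝ × ℝ => rlKernel σ (t - z.2) * rlKernel τ (z.2 - z.1) * u z.1)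
      ((volume.restrict (Ioc 0 t)).prod (volume.restrict (Ioc 0 t))) :=
    hmeas.aestronglyMeasurable.mul hu'.aestronglyMeasurable.comp_fst
  refine (integrable_indicator_iff hlt).1 ((integrable_prod_iff (haesm.indicator hlt)).2 ⟨?_, ?_⟩)
  · filter_upwards [hIoo] with r hr
    exact (integrableOn_indicator_lt_right (Ioo_subset_Ioc_self hr)).2
      ((intervalIntegrable_rlKernel_mul_rlKernel hσ hτ hr.2).mul_const (u r))
  · have hbdd : IntegrableOn (fun r => rlKernel (σ + τ) (t - r) * ‖u r‖) (Ioc 0 t) :=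
      (intervalIntegrable_iff_integrableOn_Ioc_of_le ht).1
        (intervalIntegrable_rlKernel_mul hστ hu.norm)
    refine hbdd.congr ?_
    filter_upwards [hIoo] with r hr
    simp only [norm_indicator_eq_indicator_norm]
    rw [integral_indicator_lt_right (Ioo_subset_Ioc_self hr)]
    exact (integral_norm_rlKernel_mul_rlKernel_mul hσ hτ hr.2 (u r)).symm

lemma intervalIntegrable_rlInt (hτ : 0 < τ) (ht : 0 ≤ t) (hu : IntervalIntegrable u volume 0 t) :
    IntervalIntegrable (rlInt τ u) volume 0 t := by
  have hint := intervalIntegrable_integral_triangle ht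
    (integrableOn_triangle_rlKernel one_pos hτ (by linarith) ht hu)
  refine hint.congr fun s _ => ?_
  simp [rlInt_eq_integral_rlKernel τ, rlKernel_one]

lemma rlInt_rlInt (hσ : 0 < σ) (hτ : 0 < τ) (hστ : 1 ≤ σ + τ) (ht : 0 ≤ t)
    (hu : IntervalIntegrable u volume 0 t) :
    rlInt σ (rlInt τ u) t = rlInt (σ + τ) u t := by
  have hswap := integral_integral_triangle_swap ht
    (integrableOn_triangle_rlKernel hσ hτ hστ ht hu)
  calc rlInt σ (rlInt τ u) t
      = ∫ s in (0 : ℝ)..t, ∫ r in (0 : ℝ)..s,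
          rlKernel σ (t - s) * rlKernel τ (s - r) * u r := by
        simp only [rlInt_eq_integral_rlKernel, mul_assoc, intervalIntegral.integral_const_mul]
    _ = ∫ r in (0 : ℝ)..t, ∫ s in r..t, rlKernel σ (t - s) * rlKernel τ (s - r) * u r := hswap
    _ = rlInt (σ + τ) u t := by
        rw [rlInt_eq_integral_rlKernel]
        refine intervalIntegral.integral_congr_ae ?_
        filter_upwards [compl_mem_ae_iff.2 (measure_singleton t)] with r hrt hr
        rw [uIoc_of_le ht] at hr
        rw [intervalIntegral.integral_mul_const,
          integral_rlKernel_mul_rlKernel hσ hτ (lt_of_le_of_ne hr.2 hrt)]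

lemma continuousOn_rlInt (hσ : 1 < σ) (hu : ∀ T > 0, IntervalIntegrable u volume 0 T) :
    ContinuousOn (rlInt σ u) (Ioi 0) := by
  intro t ht
  have ht : 0 < t := ht
  have hprim := intervalIntegral.continuousOn_primitive_interval' (intervalIntegrable_rlInt
    (sub_pos.2 hσ) (by positivity) (hu (t + 1) (by positivity))) left_mem_uIcc
  rw [uIcc_of_le (by positivity)] at hprim
  refine ((hprim.continuousAt (Icc_mem_nhds ht (lt_add_one t))).congr ?_).continuousWithinAt
  filter_upwards [Ioi_mem_nhds ht] with s hs
  rw [← rlInt_one, rlInt_rlInt one_pos (sub_pos.2 hσ) (by linarith) (le_of_lt hs) (hu s hs),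
    add_sub_cancel]

/-- Applying `I^(1 - σ)` reduces to equal primitives, which are then differentiated. -/
lemma eqOn_of_rlInt_eqOn (hσ : 0 < σ) (hσ1 : σ < 1) (huc : ContinuousOn u (Ioi 0))
    (hvc : ContinuousOn v (Ioi 0)) (hui : ∀ T > 0, IntervalIntegrable u volume 0 T)
    (hvi : ∀ T > 0, IntervalIntegrable v volume 0 T)
    (heq : EqOn (rlInt σ u) (rlInt σ v) (Ioi 0)) : EqOn u v (Ioi 0) := by
  have hprim : ∀ t ∈ Ioi (0 : ℝ), ∫ s in (0 : ℝ)..t, u s = ∫ s in (0 : ℝ)..t, v s := by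
    intro t ht
    have hcongr : rlInt (1 - σ) (rlInt σ u) t = rlInt (1 - σ) (rlInt σ v) t :=
      rlInt_congr (le_of_lt ht) ((ae_restrict_mem measurableSet_Ioc).mono fun s hs => heq hs.1)
    rwa [rlInt_rlInt (sub_pos.2 hσ1) hσ (by linarith) (le_of_lt ht) (hui t ht),
      rlInt_rlInt (sub_pos.2 hσ1) hσ (by linarith) (le_of_lt ht) (hvi t ht),
      sub_add_cancel, rlInt_one, rlInt_one] at hcongr
  intro t ht
  have hmem : Ioi (0 : ℝ) ∈ 𝓝 t := Ioi_mem_nhds ht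
  have hderiv_u := intervalIntegral.integral_hasDerivAt_right (hui t ht)
    (huc.stronglyMeasurableAtFilter isOpen_Ioi t ht) (huc.continuousAt hmem)
  have hderiv_v := intervalIntegral.integral_hasDerivAt_right (hvi t ht)
    (hvc.stronglyMeasurableAtFilter isOpen_Ioi t ht) (hvc.continuousAt hmem)
  exact hderiv_u.unique (hderiv_v.congr_of_eventuallyEq (eventually_of_mem hmem hprim))

end Semigroup

section Caputo

variable {α σ : ℝ} {h v w : ℝ → ℝ}

lemma rlInt_zero_right (σ : ℝ) (u : ℝ → ℝ) : rlInt σ u 0 = 0 := by simp [rlInt]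

lemma hasDerivWithinAt_rlInt_zero (hσ : 0 < σ) (hh : h =O[𝓝[>] 0] fun s => s) :
    HasDerivWithinAt (rlInt σ h) 0 (Ici 0) 0 := by
  obtain ⟨C, hC⟩ := hh.bound
  obtain ⟨δ, hδ, hbound⟩ := mem_nhdsGT_iff_exists_Ioc_subset.1 hC
  rw [← hasDerivWithinAt_Ioi_iff_Ici, hasDerivWithinAt_iff_tendsto_slope' self_notMem_Ioi]
  have hlim : Tendsto (fun t => C * (t ^ σ / Real.Gamma (σ + 2))) (𝓝[>] 0) (𝓝 0) :=
    (((((Real.continuous_rpow_const hσ.le).div_const _).const_mul C)).tendsto' 0 0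
      (by simp [Real.zero_rpow hσ.ne'])).mono_left nhdsWithin_le_nhds
  refine squeeze_zero_norm' ?_ hlim
  filter_upwards [Ioc_mem_nhdsGT hδ] with t ht
  have hrl := abs_rlInt_le (u := h) (C := C) hσ two_pos ht.1 fun s hs => by
    have := hbound ⟨hs.1, hs.2.trans ht.2⟩
    simpa [rlKernel_two, abs_of_pos hs.1] using this
  rw [slope_def_field, rlInt_zero_right, sub_zero, sub_zero, norm_div, Real.norm_of_nonneg ht.1.le,
    div_le_iff₀ ht.1]
  refine hrl.trans_eq ?_
  rw [rlKernel, show σ + 2 - 1 = σ + 1 by ring, Real.rpow_add_one ht.1.ne']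
  ring

lemma AC2On.eq_rlInt_two {g : ℝ → ℝ} {t : ℝ} (hg : AC2On g t) (h0 : g 0 = 0)
    (hd0 : deriv g 0 = 0) (ht : 0 ≤ t) : g t = rlInt 2 (deriv (deriv g)) t := by
  obtain ⟨hdiff, hint, hderiv⟩ := hg
  have hderiv' : ∀ s ∈ uIcc 0 t, HasDerivAt g (rlInt 1 (deriv (deriv g)) s) s := by
    intro s hs
    rw [uIcc_of_le ht] at hs
    have hderiv_s := hderiv s hs
    rw [hd0, zero_add, ← rlInt_one] at hderiv_s
    exact hderiv_s ▸ (hdiff s hs).hasDerivAt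
  have hftc := intervalIntegral.integral_eq_sub_of_hasDerivAt hderiv'
    (intervalIntegrable_rlInt one_pos ht hint)
  rw [h0, sub_zero, ← rlInt_one, rlInt_rlInt one_pos one_pos (by norm_num) ht hint,
    one_add_one_eq_two] at hftc
  exact hftc.symm

/-- Integrating the equation twice gives `I^(2 - α) h = I^2 v` with `h = w - w'(0) s - w(0)`; since
`I^2 = I^(2 - α) I^α`, the outer `I^(2 - α)` can be cancelled. -/
theorem eq_rlInt_of_caputoD_eq (hα1 : 1 < α) (hα2 : α < 2) (hw : Continuous w)
    (hw0 : DifferentiableAt ℝ w 0) (hAC : ∀ T > 0, AC2On (capKernel α w) T)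
    (hcap : ∀ᵐ t ∂volume.restrict (Ici 0), caputoD α w t = v t) :
    ∀ t > 0, w t = w 0 + deriv w 0 * t + rlInt α v t := by
  set h : ℝ → ℝ := fun s => w s - deriv w 0 * s - w 0 with h_def
  have hh : Continuous h := by fun_prop
  have hhO : h =O[𝓝[>] 0] fun s => s := by
    have := hw0.hasDerivAt.isLittleO.isBigO.mono (nhdsWithin_le_nhds (s := Ioi 0))
    simpa [h_def, sub_right_comm, mul_comm] using this
  have hker : capKernel α w = rlInt (2 - α) h := if_neg hα2.ne
  have hae : ∀ t : ℝ, deriv (deriv (rlInt (2 - α) h)) =ᵐ[volume.restrict (Ioc 0 t)] v := fun t =>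
    ae_restrict_of_ae_restrict_of_subset (fun s hs => hs.1.le) (hker ▸ hcap)
  rw [hker] at hAC
  have hderiv0 : deriv (rlInt (2 - α) h) 0 = 0 :=
    (uniqueDiffOn_Ici 0 0 self_mem_Ici).eq_deriv _
      ((hAC 1 one_pos).1 0 (by simp)).hasDerivAt.hasDerivWithinAt
      (hasDerivWithinAt_rlInt_zero (sub_pos.2 hα2) hhO)
  have hv : ∀ T > 0, IntervalIntegrable v volume 0 T := fun T hT =>
    (hAC T hT).2.1.congr_ae (by rw [uIoc_of_le hT.le]; exact hae T)
  have htwice : EqOn (rlInt (2 - α) h) (rlInt (2 - α) (rlInt α v)) (Ioi 0) := fun t ht => by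
    have ht : 0 < t := ht
    rw [(hAC t ht).eq_rlInt_two (rlInt_zero_right _ _) hderiv0 ht.le, rlInt_congr ht.le (hae t),
      rlInt_rlInt (sub_pos.2 hα2) (by linarith) (by linarith) ht.le (hv t ht), sub_add_cancel]
  have hcancel := eqOn_of_rlInt_eqOn (sub_pos.2 hα2) (by linarith) hh.continuousOn
    (continuousOn_rlInt hα1 hv) (fun T _ => hh.intervalIntegrable _ _)
    (fun T hT => intervalIntegrable_rlInt (by linarith) hT.le (hv T hT)) htwice
  intro t ht
  have := hcancel ht
  simp only [h_def] at this
  linarith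

end Caputo

section Resolvent

variable {α β γ σ a c₀ c₁ t : ℝ} {f g u w : ℝ → ℝ}

lemma hasSum_rlInt (hα : 1 ≤ α) (hβ : 1 ≤ β) (ht : 0 ≤ t) (hu : IntervalIntegrable u volume 0 t) :
    HasSum (fun n : ℕ => (-a) ^ n * rlInt (α * n + β) u t)
      (∫ s in (0 : ℝ)..t, mlKernel α β a (t - s) * u s) := by
  have hn (n : ℕ) : 1 ≤ α * n + β := le_add_of_nonneg_of_le (by positivity) hβ
  have hterm (n : ℕ) : (-a) ^ n * rlInt (α * n + β) u t
      = ∫ s in (0 : ℝ)..t, (-a) ^ n * rlKernel (α * n + β) (t - s) * u s := by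
    simp only [rlInt_eq_integral_rlKernel, mul_assoc, intervalIntegral.integral_const_mul]
  simp only [hterm]
  rcases ht.eq_or_lt with rfl | ht
  · simp
  refine intervalIntegral.hasSum_integral_of_dominated_convergence
    (fun n s => |a| ^ n * rlKernel (α * n + β) t * |u s|) (fun n => ?_)
    (fun n => ae_of_all _ fun s hs => ?_) (ae_of_all _ fun s _ => ?_) ?_ ?_
  · have hint := (intervalIntegrable_rlKernel_mul (hn n) hu).const_mul ((-a) ^ n)
    simpa only [mul_assoc] using (intervalIntegrable_iff.1 hint).aestronglyMeasurable
  · rw [uIoc_of_le ht.le] at hs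
    rw [norm_mul, Real.norm_eq_abs (u s)]
    gcongr
    exact norm_mlKernel_term_le hα hβ (sub_nonneg.2 hs.2) (by linarith [hs.1]) n
  · exact (summable_pow_mul_rlKernel hα (by linarith) |a| ht).mul_right _
  · simp only [tsum_mul_right]
    exact hu.abs.const_mul _
  · filter_upwards [compl_mem_ae_iff.2 (measure_singleton t)] with s hst hs
    rw [uIoc_of_le ht.le] at hs
    exact (hasSum_mlKernel hα (by linarith) (sub_pos.2 (lt_of_le_of_ne hs.2 hst))).mul_right _

lemma intervalIntegrable_mlKernel_mul (hα : 1 ≤ α) (hβ : 1 ≤ β) (ht : 0 ≤ t)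
    (hu : IntervalIntegrable u volume 0 t) :
    IntervalIntegrable (fun s => mlKernel α β a (t - s) * u s) volume 0 t := by
  rw [intervalIntegrable_iff_integrableOn_Ioo_of_le ht] at hu ⊢
  refine hu.bdd_mul (c := ∑' n : ℕ, |a| ^ n * rlKernel (α * n + β) t) ?_ ?_
  · refine ContinuousOn.aestronglyMeasurable ?_ measurableSet_Ioo
    exact (continuousOn_mlKernel hα (by linarith)).comp (by fun_prop) fun s hs => sub_pos.2 hs.2
  · filter_upwards [ae_restrict_mem measurableSet_Ioo] with s hs
    exact tsum_of_norm_bounded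
      (summable_pow_mul_rlKernel hα (by linarith) |a| (hs.1.trans hs.2)).hasSum
      fun n => norm_mlKernel_term_le hα hβ (sub_pos.2 hs.2).le (by linarith [hs.1]) n

lemma integral_mlKernel_mul_rlInt (hα : 1 ≤ α) (hβ : 1 ≤ β) (hγ : 0 < γ) (ht : 0 ≤ t)
    (hu : IntervalIntegrable u volume 0 t) :
    ∫ s in (0 : ℝ)..t, mlKernel α β a (t - s) * rlInt γ u s
      = ∫ s in (0 : ℝ)..t, mlKernel α (β + γ) a (t - s) * u s := by
  refine (hasSum_rlInt hα hβ ht (intervalIntegrable_rlInt hγ ht hu)).unique ?_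
  convert hasSum_rlInt (a := a) hα (by linarith : 1 ≤ β + γ) ht hu using 3 with n
  have hn : 0 ≤ α * n := by positivity
  rw [rlInt_rlInt (by linarith) hγ (by linarith) ht hu, add_assoc]

lemma integral_mlKernel_mul_rlKernel (hα : 1 ≤ α) (hβ : 1 ≤ β) (hγ : 1 ≤ γ) (ht : 0 < t) :
    ∫ s in (0 : ℝ)..t, mlKernel α β a (t - s) * rlKernel γ s = mlKernel α (β + γ) a t := by
  refine (hasSum_rlInt hα hβ ht.le (intervalIntegrable_rlKernel hγ 0 t)).unique ?_
  convert hasSum_mlKernel (a := a) hα (by linarith : 0 < β + γ) ht using 3 with n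
  have hn : 0 ≤ α * n := by positivity
  rw [rlInt_rlKernel (by linarith) (by linarith) ht, add_assoc]

lemma rlInt_eq_sum_add_of_volterra (hα : 0 < α) (hσ : 1 ≤ σ) (ht : 0 ≤ t)
    (hg : IntervalIntegrable g volume 0 t) (hw : IntervalIntegrable w volume 0 t)
    (heq : ∀ s ∈ Ioc 0 t, w s = g s - a * rlInt α w s) (N : ℕ) :
    rlInt σ w t = ∑ n ∈ Finset.range N, (-a) ^ n * rlInt (α * n + σ) g t
      + (-a) ^ N * rlInt (α * N + σ) w t := by
  induction N with
  | zero => simp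
  | succ N ih =>
    have hN : 1 ≤ α * N + σ := le_add_of_nonneg_of_le (by positivity) hσ
    have hgN := intervalIntegrable_rlKernel_mul hN hg
    have hwN := intervalIntegrable_rlKernel_mul hN (intervalIntegrable_rlInt hα ht hw)
    have hstep : rlInt (α * N + σ) w t
        = rlInt (α * N + σ) g t - a * rlInt (α * (N + 1 : ℕ) + σ) w t := by
      calc rlInt (α * N + σ) w t
          = rlInt (α * N + σ) (fun s => g s - a * rlInt α w s) t :=
            rlInt_congr ht ((ae_restrict_mem measurableSet_Ioc).mono heq)
        _ = rlInt (α * N + σ) g t - a * rlInt (α * N + σ) (rlInt α w) t := by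
            simp only [rlInt_eq_integral_rlKernel (α * N + σ), mul_sub, mul_left_comm _ a]
            rw [intervalIntegral.integral_sub hgN (hwN.const_mul a),
              intervalIntegral.integral_const_mul]
        _ = rlInt (α * N + σ) g t - a * rlInt (α * (N + 1 : ℕ) + σ) w t := by
            rw [rlInt_rlInt (by linarith) hα (by linarith) ht hw]
            push_cast
            ring_nf
    rw [Finset.sum_range_succ, ih, hstep, pow_succ]
    ring

lemma rlInt_eq_integral_mlKernel_of_volterra (hα : 1 ≤ α) (hσ : 1 ≤ σ) (ht : 0 ≤ t)
    (hg : IntervalIntegrable g volume 0 t) (hw : IntervalIntegrable w volume 0 t)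
    (heq : ∀ s ∈ Ioc 0 t, w s = g s - a * rlInt α w s) :
    rlInt σ w t = ∫ s in (0 : ℝ)..t, mlKernel α σ a (t - s) * g s := by
  have hremainder := (hasSum_rlInt (a := a) hα hσ ht hw).summable.tendsto_atTop_zero
  have hlim := (hasSum_rlInt (a := a) hα hσ ht hg).tendsto_sum_nat.add hremainder
  rw [add_zero] at hlim
  exact tendsto_nhds_unique tendsto_const_nhds (hlim.congr fun N =>
    (rlInt_eq_sum_add_of_volterra (by linarith) hσ ht hg hw heq N).symm)

lemma integral_mlKernel_mul_eq_sub (hα : 1 ≤ α) (hβ : 1 ≤ β) (ht : 0 ≤ t)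
    (hu : IntervalIntegrable u volume 0 t) :
    ∫ s in (0 : ℝ)..t, mlKernel α β a (t - s) * u s
      = rlInt β u t - a * ∫ s in (0 : ℝ)..t, mlKernel α (α + β) a (t - s) * u s := by
  rw [rlInt_eq_integral_rlKernel, ← intervalIntegral.integral_const_mul,
    ← intervalIntegral.integral_sub (intervalIntegrable_rlKernel_mul hβ hu)
      ((intervalIntegrable_mlKernel_mul hα (by linarith) ht hu).const_mul a)]
  refine intervalIntegral.integral_congr_ae ?_
  filter_upwards [compl_mem_ae_iff.2 (measure_singleton t)] with s hst hs
  rw [uIoc_of_le ht] at hs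
  rw [mlKernel_eq_sub hα (by linarith) (sub_pos.2 (lt_of_le_of_ne hs.2 hst))]
  ring

theorem eq_mlKernel_add_integral_of_volterra (hα : 1 ≤ α) (hβ : 1 ≤ β) (ht : 0 < t)
    (hf : IntervalIntegrable f volume 0 t) (hw : IntervalIntegrable w volume 0 t)
    (heq : ∀ s ∈ Ioc 0 t, w s = c₀ + c₁ * s + rlInt β f s - a * rlInt α w s) :
    w t = c₀ * mlKernel α 1 a t + c₁ * mlKernel α 2 a t
      + ∫ s in (0 : ℝ)..t, mlKernel α β a (t - s) * f s := by
  set g : ℝ → ℝ := fun s => c₀ * rlKernel 1 s + c₁ * rlKernel 2 s + rlInt β f s with g_def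
  have hk₁ := intervalIntegrable_rlKernel le_rfl 0 t
  have hk₂ := intervalIntegrable_rlKernel one_le_two 0 t
  have hIf := intervalIntegrable_rlInt (by linarith : 0 < β) ht.le hf
  have hg : IntervalIntegrable g volume 0 t := ((hk₁.const_mul c₀).add (hk₂.const_mul c₁)).add hIf
  have hc₀ := (intervalIntegrable_mlKernel_mul (a := a) hα hα ht.le hk₁).const_mul c₀
  have hc₁ := (intervalIntegrable_mlKernel_mul (a := a) hα hα ht.le hk₂).const_mul c₁
  have hc := intervalIntegrable_mlKernel_mul (a := a) hα hα ht.le hIf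
  have heq' : ∀ s ∈ Ioc 0 t, w s = g s - a * rlInt α w s := fun s hs => by
    simp only [heq s hs, g_def, rlKernel_one, rlKernel_two, mul_one]
  have hresolvent : rlInt α w t = c₀ * mlKernel α (α + 1) a t + c₁ * mlKernel α (α + 2) a t
      + ∫ s in (0 : ℝ)..t, mlKernel α (α + β) a (t - s) * f s := by
    rw [rlInt_eq_integral_mlKernel_of_volterra hα hα ht.le hg hw heq',
      ← integral_mlKernel_mul_rlInt hα hα (by linarith) ht.le hf,
      ← integral_mlKernel_mul_rlKernel hα hα le_rfl ht,
      ← integral_mlKernel_mul_rlKernel hα hα one_le_two ht,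
      ← intervalIntegral.integral_const_mul, ← intervalIntegral.integral_const_mul,
      ← intervalIntegral.integral_add hc₀ hc₁, ← intervalIntegral.integral_add (hc₀.add hc₁) hc]
    exact intervalIntegral.integral_congr fun s _ => by simp only [g_def]; ring
  rw [heq' t ⟨ht, le_rfl⟩, hresolvent, integral_mlKernel_mul_eq_sub hα hβ ht.le hf,
    mlKernel_eq_sub hα one_pos ht, mlKernel_eq_sub hα two_pos ht]
  ring

end Resolvent

section LowerBound

variable {α β γ a c₀ c₁ t : ℝ} {f w : ℝ → ℝ}

lemma mlKernel_add_le_of_volterra (hα : 1 ≤ α) (hα2 : α ≤ 2) (hβ : 3 * (α / 2) ≤ β) (ha : 0 < a)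
    (ht : 0 < t) (hf : IntervalIntegrable f volume 0 t) (hw : IntervalIntegrable w volume 0 t)
    (hf0 : ∀ᵐ s ∂volume.restrict (Ici 0), 0 ≤ f s)
    (heq : ∀ s ∈ Ioc 0 t, w s = c₀ + c₁ * s + rlInt β f s - a * rlInt α w s) :
    c₀ * mlKernel α 1 a t + c₁ * mlKernel α 2 a t ≤ w t := by
  rw [eq_mlKernel_add_integral_of_volterra hα (by linarith) ht hf hw heq,
    intervalIntegral.integral_of_le ht.le, integral_Ioc_eq_integral_Ioo]
  refine le_add_of_nonneg_right (integral_nonneg_of_ae ?_)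
  filter_upwards [ae_restrict_of_ae_restrict_of_subset (fun s hs => hs.1.le) hf0,
    ae_restrict_mem measurableSet_Ioo] with s hfs hs
  exact mul_nonneg (mlKernel_nonneg hα hα2 hβ ha (sub_pos.2 hs.2)) hfs

lemma volterra_of_caputoD_add_eq (hγ : 0 < γ) (hα1 : 1 < α) (hα2 : α < 2)
    (hf : ∀ T > 0, IntervalIntegrable f volume 0 T) (hw : Continuous w)
    (hw0 : DifferentiableAt ℝ w 0) (hAC : ∀ T > 0, AC2On (capKernel α w) T)
    (heq : ∀ᵐ t ∂volume.restrict (Ici 0), caputoD α w t + a * w t = rlInt γ f t) (ht : 0 < t) :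
    w t = w 0 + deriv w 0 * t + rlInt (α + γ) f t - a * rlInt α w t := by
  have hint_f := intervalIntegrable_rlKernel_mul hα1.le
    (intervalIntegrable_rlInt hγ ht.le (hf t ht))
  have hint_w := intervalIntegrable_rlKernel_mul hα1.le (hw.intervalIntegrable 0 t)
  have hsplit : rlInt α (fun s => rlInt γ f s - a * w s) t
      = rlInt (α + γ) f t - a * rlInt α w t := by
    rw [← rlInt_rlInt (by linarith) hγ (by linarith) ht.le (hf t ht)]
    simp only [rlInt_eq_integral_rlKernel α, mul_sub, mul_left_comm _ a]
    rw [intervalIntegral.integral_sub hint_f (hint_w.const_mul a),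
      intervalIntegral.integral_const_mul]
  have hcap := eq_rlInt_of_caputoD_eq (v := fun s => rlInt γ f s - a * w s) hα1 hα2 hw hw0 hAC
    (heq.mono fun s hs => eq_sub_of_add_eq hs) t ht
  rw [hcap, hsplit, add_sub_assoc]

end LowerBound

theorem liminf_pos_v_general {α γ a : ℝ} {f w : ℝ → ℝ} (hα1 : 1 < α) (hα2 : α < 2)
    (hγ : α / 2 ≤ γ) (ha : 0 < a) (hf : ∀ T > 0, IntervalIntegrable f volume 0 T)
    (hw : Continuous w) (hw0 : DifferentiableAt ℝ w 0)
    (hAC : ∀ T > 0, AC2On (capKernel α w) T)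
    (heq : ∀ᵐ t ∂volume.restrict (Ici 0), caputoD α w t + a * w t = rlInt γ f t ∧ 0 ≤ f t) :
    ((deriv w 0 / (a * Real.Gamma (2 - α)) : ℝ) : EReal) ≤
      liminf (fun t : ℝ => ((t ^ (α - 1) * w t : ℝ) : EReal)) atTop := by
  have hvolterra := fun (t : ℝ) (ht : 0 < t) => volterra_of_caputoD_add_eq (by linarith) hα1 hα2 hf
    hw hw0 hAC (heq.mono fun _ h => h.1) ht
  have hlim : Tendsto
      (fun t => t ^ (α - 1) * (w 0 * mlKernel α 1 a t + deriv w 0 * mlKernel α 2 a t)) atTop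
      (𝓝 (deriv w 0 / (a * Real.Gamma (2 - α)))) := by
    have := ((tendsto_rpow_mul_mlKernel_nhds_zero hα1.le hα2 one_pos hα1 ha).const_mul (w 0)).add
      ((tendsto_rpow_mul_mlKernel_two hα1 hα2 ha).const_mul (deriv w 0))
    rw [mul_zero, zero_add, mul_one_div] at this
    exact this.congr fun t => by ring
  rw [← (continuous_coe_real_ereal.tendsto _ |>.comp hlim).liminf_eq]
  refine liminf_le_liminf ?_
  filter_upwards [eventually_gt_atTop 0] with t ht
  refine EReal.coe_le_coe_iff.2 (mul_le_mul_of_nonneg_left ?_ (by positivity))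
  exact mlKernel_add_le_of_volterra hα1.le hα2.le (by linarith) ha ht (hf t ht)
    (hw.intervalIntegrable 0 t) (heq.mono fun _ h => h.2) fun s hs => hvolterra s hs.1

/-- Lemma 2.3 (v): if γ ≥ α/2, α + γ ≤ 2 and w'(0) > 0, then liminf t^{α−1} w(t) > 0. -/
theorem liminf_pos_v
    (γ α p a b : ℝ) (f w : ℝ → ℝ)
    (hγ : 0 < γ) (hα1 : 1 < α) (hα2 : α < 2) (hp : 1 < p) (ha : 0 < a) (hb : 0 < b)
    (hf : ∀ T > (0:ℝ), IntervalIntegrable f volume 0 T)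
    (hw : ContDiff ℝ 1 w)
    (hw0 : ∃ t : ℝ, 0 ≤ t ∧ w t ≠ 0)
    (hAC : ∀ T > (0:ℝ), AC2On (capKernel α w) T)
    (heq : ∀ᵐ t ∂(volume.restrict (Set.Ici (0:ℝ))),
      caputoD α w t + a * w t = rlInt γ f t ∧ f t ≥ b * |w t| ^ p)
    (hγα : α / 2 ≤ γ) (hαγ : α + γ ≤ 2) (hw' : 0 < deriv w 0) :
    0 < liminf (fun t : ℝ => ((t ^ (α - 1) * w t : ℝ) : EReal)) atTop := by
  have : 0 < Real.Gamma (2 - α) := Real.Gamma_pos_of_pos (sub_pos.2 hα2)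
  refine (EReal.coe_pos.2 (by positivity)).trans_le (liminf_pos_v_general hα1 hα2 hγα ha hf
    hw.continuous (hw.differentiable one_ne_zero 0) hAC ?_)
  exact heq.mono fun t h => ⟨h.1, le_trans (by positivity) h.2⟩
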